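/- There exists an algebraically closed field k of positive characteristic p, a finite separable extension K → L of two dimensional algebraic function fields over k, regular local rings R and S which are local rings of closed points on nonsingular algebraic surfaces over k with quotient fields K and L respectively such that S dominates R, and a valuation ω of L dominating S, for which local monomialization fails: there is no commutative diagram R → S, R → R_1, S → S_1, R_1 → S_1 with vertical arrows products of monoidal transforms, ω dominating S_1, S_1 dominating R_1, and regular parameters u_1,…,u_m of R_1, x_1,…,x_n of S_1, units δ_i ∈ S_1 and an integer matrix A = (a_{ij}) of rank m with u_i = δ_i ∏_j x_j^{a_{ij}}. -/

import Mathlib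

/-!
The counterexample lives over `k`, the algebraic closure of `𝔽₂`. Take `L = k(x, y)` and
`K = k(u, v)` with `u = (1 + y) x²` and `v = y² + x`; then `y` is a root of the separable polynomial
`(Y + 1)(Y⁴ + v²) + u` and generates `L` over `K` (`ext_finite_separable`). The local rings are
`R = k[u, v]` and `S = k[x, y]`, both localized at the origin.

The key is that the shape of this extension reproduces itself. Call a *stage* a pair of such local
rings with `u = γ x²` and `v = τ y² + x Ω`, where `γ, τ, Ω` are units of `S` and `γ` has a unit
coefficient at `y`. Choose a general `μ` in `k` and blow up twice upstairs and twice downstairs,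
along `x = y² (y₁ + μ)` and `u = v² (v₁ + c)`, where `c` is the residue of `u / v²` at the chosen
point. Because squaring is additive in characteristic two, `(y, y₁, v, v₁)` is again a stage
(`Stage.exists_next`). Iterating gives infinite sequences of quadratic transforms of `R` and `S`,
and a valuation ring `ω` dominating the union of the upper rings (`exists_valuation`).

A monoidal transform of a two dimensional regular local ring along `ω` is either trivial or the
next quadratic transform (`mt_step`), so `R₁` and `S₁` are members of the two sequences
(`mem_chainR`, `mem_chainS`): either one of the rings `R`, `S` of a stage, or the ring `R'`, `S'`
after the first of the two blowups. All comparisons are made in the ring `S'` of the stage of `S₁`,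
a factorial ring with parameters `x / y` and `y`. If `R₁` is beyond the stage of `S₁`, or is the `R'`
of that stage, then it contains `u / v`, which is not in `S'` (`u_div_v_not_mem`). If `R₁` is the
ring `R` of the same stage, no parameters of `R₁` are independent monomials in `S'` (`core_same`). If
`R₁` comes earlier, its parameters are either divisible by three different primes of `S'` or are
both powers of `u` up to units (`core_lt`), and again are not independent monomials. Finally,
monomials in parameters of `S` are monomials in parameters of `S'`, except when both parameters of
`S` become associates of `y`, which is excluded because `U` or `V` has another prime factor
(`Core.not_monomial`).
-/

noncomputable section

namespace LocalMonomial

variable {k F : Type*} [Field k] [Field F] [Algebra k F]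

/-- For local subrings of a field (where the maximal ideal is the set of nonunits),
`B` dominates `A` iff `A ⊆ B` and `m_B ∩ A = m_A`, which is expressed elementwise. -/
def DominatesSet (B A : Set F) : Prop :=
  A ⊆ B ∧ ∀ x ∈ A, x ≠ 0 → x⁻¹ ∈ B → x⁻¹ ∈ A

/-- The subset `A` of `F` is the localization of the subalgebra `B` at the prime `P`. -/
def IsLocalizationAt (B : Subalgebra k F) (P : Ideal B) (A : Set F) : Prop :=
  ∀ x : F, x ∈ A ↔ ∃ b s : B, s ∉ P ∧ x * (s : F) = (b : F)

/-- `R` is essentially of finite type over `k`: a localization of a finite type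
`k`-algebra at a prime ideal. -/
def EssFinType (R : Subalgebra k F) : Prop :=
  ∃ B : Subalgebra k F, B.FG ∧ ∃ P : Ideal B, P.IsPrime ∧ IsLocalizationAt B P (R : Set F)

/-- `K` (a subset of the ambient field `F`) is the quotient field of `R`. -/
def HasFractionField (R : Subalgebra k F) (K : Set F) : Prop :=
  (R : Set F) ⊆ K ∧ ∀ x ∈ K, ∃ a ∈ R, ∃ b ∈ R, b ≠ 0 ∧ x = a / b

/-- A regular local ring: a Noetherian local ring whose maximal ideal can be generated
by `dim R` elements. -/
def IsRegularLocal (R : Type*) [CommRing R] : Prop :=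
  IsNoetherianRing R ∧ IsLocalRing R ∧
    ∃ s : Finset R, (∀ a : R, a ∈ Ideal.span (s : Set R) ↔ a ∈ nonunits R) ∧
      (s.card : WithBot ℕ∞) = ringKrullDim R

/-- A regular system of parameters of a (regular) local ring: a family generating the
maximal ideal whose cardinality is the Krull dimension. -/
def IsRegularSystemOfParameters {R : Type*} [CommRing R] {m : ℕ} (u : Fin m → R) : Prop :=
  (∀ a : R, a ∈ Ideal.span (Set.range u) ↔ a ∈ nonunits R) ∧
    (m : WithBot ℕ∞) = ringKrullDim R

/-- A pair of regular parameters of a two dimensional regular local ring. -/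
def IsRegularParamPair {R : Type*} [CommRing R] (x y : R) : Prop :=
  (∀ a : R, a ∈ Ideal.span {x, y} ↔ a ∈ nonunits R) ∧ ringKrullDim R = 2

/-- `A'` is a monoidal transform of `A`: a local ring of the blowup of a prime ideal
`P` of `A` with `A/P` regular, which dominates `A`. -/
def IsMonoidalTransform (A A' : Subalgebra k F) : Prop :=
  ∃ P : Ideal A, P.IsPrime ∧ IsRegularLocal (↥A ⧸ P) ∧
    ∃ x : A, x ∈ P ∧ (x : F) ≠ 0 ∧
      ∃ Q : Ideal (Algebra.adjoin k ((A : Set F) ∪ {y : F | ∃ p ∈ P, y * (x : F) = (p : F)})),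
        Q.IsPrime ∧ IsLocalizationAt _ Q (A' : Set F) ∧
          DominatesSet (A' : Set F) (A : Set F)

/-- `A'` is a quadratic transform of the two dimensional regular local ring `A`:
a two dimensional local ring of the blowup of the maximal ideal of `A` (= the set of
nonunits of `A`) which dominates `A`. -/
def IsQuadraticTransform (A A' : Subalgebra k F) : Prop :=
  ∃ x : A, ¬IsUnit x ∧ (x : F) ≠ 0 ∧
    ∃ Q : Ideal (Algebra.adjoin k
        ((A : Set F) ∪ {y : F | ∃ p : A, ¬IsUnit p ∧ y * (x : F) = (p : F)})),
      Q.IsPrime ∧ IsLocalizationAt _ Q (A' : Set F) ∧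
        DominatesSet (A' : Set F) (A : Set F) ∧ ringKrullDim ↥A' = 2

/-- `F` is an algebraic function field of transcendence degree `2` over `k`:
a finitely generated field extension of `k` of transcendence degree `2`. -/
def IsFunctionFieldTrdeg2 (k F : Type*) [Field k] [Field F] [Algebra k F] : Prop :=
  (∃ s : Finset F, IntermediateField.adjoin k (s : Set F) = ⊤) ∧
    ∃ x y : F, AlgebraicIndependent k ![x, y] ∧
      ∀ z : F, IsAlgebraic (IntermediateField.adjoin k ({x, y} : Set F)) z

/-- `R` is an algebraic local ring of the subfield `K` of the ambient field `F`:
a local domain which is a localization of a finite type `k`-algebra and whose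
quotient field is `K`. -/
def IsAlgebraicLocalRingOf (R : Subalgebra k F) (K : Set F) : Prop :=
  IsLocalRing R ∧ EssFinType R ∧ HasFractionField R K

/-- `R` is a two dimensional regular algebraic local ring of `K`. -/
def IsTwoDimRegularAlgLocalRingOf (R : Subalgebra k F) (K : Set F) : Prop :=
  IsAlgebraicLocalRingOf R K ∧ IsRegularLocal R ∧ ringKrullDim R = 2

/-- The Jacobian determinant `(∂u/∂x)(∂v/∂y) - (∂u/∂y)(∂v/∂x)`, where the partial
derivatives with respect to the regular parameters `x, y` are encoded by a pair of
`k`-derivations `Dx, Dy` dual to `x, y`. -/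
def jacobianDet {S : Subalgebra k F} (Dx Dy : Derivation k S S) (u v : S) : S :=
  Dx u * Dy v - Dy u * Dx v

/-- `Dx, Dy` are the partial derivative operators with respect to the regular
parameters `x, y` of `S`. -/
def IsDualBasisDeriv {S : Subalgebra k F} (x y : S) (Dx Dy : Derivation k S S) : Prop :=
  Dx x = 1 ∧ Dx y = 0 ∧ Dy x = 0 ∧ Dy y = 1

/-- `R → S` is of type 0 with respect to the regular parameters `u, v` of `R` and
`x, y` of `S`: `u = γ x`, `v = y τ + x Ω` with `γ, τ` units of `S`. -/
def IsTypeZero {R S : Subalgebra k F} (u v : R) (x y : S) : Prop :=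
  ∃ γ τ Ω : S, IsUnit γ ∧ IsUnit τ ∧
    (u : F) = (γ : F) * (x : F) ∧ (v : F) = (y : F) * (τ : F) + (x : F) * (Ω : F)

/-- `R → S` is of type 1 with respect to the regular parameters `u, v` of `R` and
`x, y` of `S`: `u = γ x`, `v = y^p τ + x Ω` with `γ, τ` units of `S`. -/
def IsTypeOne (p : ℕ) {R S : Subalgebra k F} (u v : R) (x y : S) : Prop :=
  ∃ γ τ Ω : S, IsUnit γ ∧ IsUnit τ ∧
    (u : F) = (γ : F) * (x : F) ∧ (v : F) = (y : F) ^ p * (τ : F) + (x : F) * (Ω : F)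

/-- `R → S` is of type 2 with respect to the regular parameters `u, v` of `R` and
`x, y` of `S`: `u = γ x^p`, `v = y τ + x Ω` with `γ, τ` units of `S`. -/
def IsTypeTwo (p : ℕ) {R S : Subalgebra k F} (u v : R) (x y : S) : Prop :=
  ∃ γ τ Ω : S, IsUnit γ ∧ IsUnit τ ∧
    (u : F) = (γ : F) * (x : F) ^ p ∧ (v : F) = (y : F) * (τ : F) + (x : F) * (Ω : F)

/-- `R → S` is quasi-finite: `S/m_R S` is a finite dimensional `k`-vector space. -/
def QuasiFinite (R S : Subalgebra k F) (h : R ≤ S) : Prop :=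
  FiniteDimensional k
    (S ⧸ Ideal.span ((Subalgebra.inclusion h) '' {a : R | ¬IsUnit a}))

/-- `L = K(Θ)` is an Artin-Schreier extension of the subfield `K` of the ambient
field `L`, with Artin-Schreier generator `Θ`: `Θ^p - Θ ∈ K` and `[L : K] = p`. -/
def IsArtinSchreierGen (K : IntermediateField k F) (p : ℕ) (Θ : F) : Prop :=
  Θ ∉ K ∧ Θ ^ p - Θ ∈ K ∧ IntermediateField.adjoin K {Θ} = ⊤ ∧
    Module.finrank K F = p

end LocalMonomial

/-! ### The local ring of the plane at the origin -/

namespace MonomCex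
open LocalMonomial MvPolynomial

section Loc
variable {k L : Type*} [Field k] [Field L] [Algebra k L]

/-- The local ring at the origin of the plane with coordinate functions `a, b`, as a
subalgebra of `L`: all fractions `f(a,b) / g(a,b)` with `g(0,0) ≠ 0`. Denominators are cleared
in the definition, so the two descriptions agree when `a, b` are algebraically independent. -/
def loc (k : Type*) {L : Type*} [Field k] [Field L] [Algebra k L] (a b : L) : Subalgebra k L where
  carrier := {z | ∃ f g : MvPolynomial (Fin 2) k,
    constantCoeff g ≠ 0 ∧ z * aeval ![a, b] g = aeval ![a, b] f}
  mul_mem' := by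
    rintro z z' ⟨f, g, hg, h⟩ ⟨f', g', hg', h'⟩
    refine ⟨f * f', g * g', by simp [hg, hg'], ?_⟩
    rw [map_mul, map_mul, ← h, ← h']; ring
  add_mem' := by
    rintro z z' ⟨f, g, hg, h⟩ ⟨f', g', hg', h'⟩
    refine ⟨f * g' + f' * g, g * g', by simp [hg, hg'], ?_⟩
    rw [map_add, map_mul, map_mul, map_mul, ← h, ← h']; ring
  algebraMap_mem' := by
    intro c
    exact ⟨C c, 1, by simp, by simp⟩

/-- `z` is a unit of the subring `A` of the field `L`. -/
def Un (A : Subalgebra k L) (z : L) : Prop := z ∈ A ∧ z ≠ 0 ∧ z⁻¹ ∈ A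

/-- `A` is local and its maximal ideal is generated by `X, Y`, phrased on elements of `L`. -/
structure Par (A : Subalgebra k L) (X Y : L) : Prop where
  memX : X ∈ A
  memY : Y ∈ A
  ne_one : ∀ s ∈ A, ∀ t ∈ A, s * X + t * Y ≠ 1
  dich : ∀ z ∈ A, Un A z ∨ ∃ s ∈ A, ∃ t ∈ A, z = s * X + t * Y

lemma mv_decomp (f : MvPolynomial (Fin 2) k) :
    ∃ f₁ f₂ : MvPolynomial (Fin 2) k, f = C (constantCoeff f) + f₁ * X 0 + f₂ * X 1 := by
  induction f using MvPolynomial.induction_on with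
  | C a => exact ⟨0, 0, by simp⟩
  | add p q hp hq =>
    obtain ⟨p1, p2, hp⟩ := hp
    obtain ⟨q1, q2, hq⟩ := hq
    refine ⟨p1 + q1, p2 + q2, ?_⟩
    rw [map_add, C_add]
    linear_combination hp + hq
  | mul_X p i hp =>
    fin_cases i
    · exact ⟨p, 0, by simp⟩
    · exact ⟨0, p, by simp⟩

lemma loc_memX (a b : L) : a ∈ loc k a b := ⟨X 0, 1, by simp, by simp⟩
lemma loc_memY (a b : L) : b ∈ loc k a b := ⟨X 1, 1, by simp, by simp⟩
lemma mem_C (A : Subalgebra k L) (c : k) : algebraMap k L c ∈ A := A.algebraMap_mem c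
lemma aeval_mem_loc (a b : L) (f : MvPolynomial (Fin 2) k) : aeval ![a, b] f ∈ loc k a b :=
  ⟨f, 1, by simp, by simp⟩

lemma Un.mul {A : Subalgebra k L} {y z : L} (hy : Un A y) (hz : Un A z) : Un A (y * z) :=
  ⟨A.mul_mem hy.1 hz.1, mul_ne_zero hy.2.1 hz.2.1, by
    rw [mul_inv]; exact A.mul_mem hy.2.2 hz.2.2⟩
lemma Un.inv {A : Subalgebra k L} {y : L} (hy : Un A y) : Un A y⁻¹ :=
  ⟨hy.2.2, inv_ne_zero hy.2.1, by rw [inv_inv]; exact hy.1⟩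
lemma Un.pow {A : Subalgebra k L} {y : L} (hy : Un A y) (n : ℕ) : Un A (y ^ n) :=
  ⟨A.pow_mem hy.1 n, pow_ne_zero n hy.2.1, by rw [← inv_pow]; exact A.pow_mem hy.2.2 n⟩
lemma Un.zpow {A : Subalgebra k L} {y : L} (hy : Un A y) (n : ℤ) : Un A (y ^ n) := by
  obtain ⟨n, rfl | rfl⟩ := n.eq_nat_or_neg
  · simpa using hy.pow n
  · simpa using (hy.pow n).inv
lemma Un.one (A : Subalgebra k L) : Un A 1 := ⟨A.one_mem, one_ne_zero, by simp [A.one_mem]⟩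
lemma Un.C (A : Subalgebra k L) {c : k} (hc : c ≠ 0) : Un A (algebraMap k L c) :=
  ⟨mem_C A c, by simpa using hc, by rw [← map_inv₀]; exact mem_C A _⟩
lemma Un.mono {A B : Subalgebra k L} (h : A ≤ B) {y : L} (hy : Un A y) : Un B y :=
  ⟨h hy.1, hy.2.1, h hy.2.2⟩

namespace Par
variable {A : Subalgebra k L} {X Y : L}

lemma symm (h : Par A X Y) : Par A Y X where
  memX := h.memY
  memY := h.memX
  ne_one s hs t ht := by rw [add_comm]; exact h.ne_one t ht s hs
  dich z hz := (h.dich z hz).imp_right fun ⟨s, hs, t, ht, e⟩ => ⟨t, ht, s, hs, by rw [e, add_comm]⟩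

lemma not_un (h : Par A X Y) {s t : L} (hs : s ∈ A) (ht : t ∈ A) : ¬ Un A (s * X + t * Y) := by
  rintro ⟨_, h0, h1⟩
  refine h.ne_one _ (A.mul_mem h1 hs) _ (A.mul_mem h1 ht) ?_
  rw [mul_assoc, mul_assoc, ← mul_add, inv_mul_cancel₀ h0]

lemma notunX (h : Par A X Y) : ¬ Un A X := by
  simpa using h.not_un A.one_mem A.zero_mem
lemma notunY (h : Par A X Y) : ¬ Un A Y := h.symm.notunX

/-- Adding an element of the maximal ideal to a unit gives a unit. -/
lemma un_add (h : Par A X Y) {z s t : L} (hz : Un A z) (hs : s ∈ A) (ht : t ∈ A) :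
    Un A (z + s * X + t * Y) := by
  have hm : z + s * X + t * Y ∈ A :=
    A.add_mem (A.add_mem hz.1 (A.mul_mem hs h.memX)) (A.mul_mem ht h.memY)
  rcases h.dich _ hm with h1 | ⟨s', hs', t', ht', e⟩
  · exact h1
  · exfalso
    have : z = (s' - s) * X + (t' - t) * Y := by linear_combination e
    exact h.not_un (A.sub_mem hs' hs) (A.sub_mem ht' ht) (this ▸ hz)

lemma un_of_mul (_h : Par A X Y) {s t : L} (hs : s ∈ A) (ht : t ∈ A) (hu : Un A (s * t)) :
    Un A s := by
  have h0 := hu.2.1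
  refine ⟨hs, left_ne_zero_of_mul h0, ?_⟩
  have : s⁻¹ = t * (s * t)⁻¹ := by
    have := left_ne_zero_of_mul h0
    have := right_ne_zero_of_mul h0
    field_simp
  rw [this]; exact A.mul_mem ht hu.2.2

lemma scaleX (h : Par A X Y) {τ : L} (hτ : Un A τ) : Par A (τ * X) Y where
  memX := A.mul_mem hτ.1 h.memX
  memY := h.memY
  ne_one s hs t ht := by
    rw [← mul_assoc]; exact h.ne_one _ (A.mul_mem hs hτ.1) t ht
  dich z hz := (h.dich z hz).imp_right fun ⟨s, hs, t, ht, e⟩ =>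
    ⟨s * τ⁻¹, A.mul_mem hs hτ.2.2, t, ht, by rw [e]; have := hτ.2.1; field_simp⟩

lemma shearX (h : Par A X Y) {w : L} (hw : w ∈ A) : Par A (X + w * Y) Y where
  memX := A.add_mem h.memX (A.mul_mem hw h.memY)
  memY := h.memY
  ne_one s hs t ht := by
    have := h.ne_one s hs (t + s * w) (A.add_mem ht (A.mul_mem hs hw))
    intro e; apply this; rw [← e]; ring
  dich z hz := (h.dich z hz).imp_right fun ⟨s, hs, t, ht, e⟩ =>
    ⟨s, hs, t - s * w, A.sub_mem ht (A.mul_mem hs hw), by rw [e]; ring⟩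

/-- `X` does not divide `Y` as soon as this holds for one other pair of generators of the
maximal ideal. -/
lemma div_not_mem {a b : L} (h : Par A X Y) (hab : Par A a b) (h1 : a / b ∉ A) (h2 : b / a ∉ A) :
    Y / X ∉ A := by
  intro hd
  have hX0 : X ≠ 0 := by
    rintro rfl
    -- then `X = 0` generates nothing and `m = (Y)`; write `a, b` as multiples of `Y`
    have hY : Y ≠ 0 := by
      rintro rfl
      rcases h.dich a hab.memX with hu | ⟨s, _, t, _, e⟩
      · exact hab.notunX hu
      · apply h1; simp at e; subst e; simp [A.zero_mem]
    rcases h.dich a hab.memX with hu | ⟨s, _, s₁, hs₁, ea⟩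
    · exact hab.notunX hu
    rcases h.dich b hab.memY with hu | ⟨t, _, t₁, ht₁, eb⟩
    · exact hab.notunY hu
    simp only [mul_zero, zero_add] at ea eb
    rcases h.dich s₁ hs₁ with hu | ⟨p, hp, p', hp', ep⟩
    · apply h2; rw [ea, eb, mul_div_mul_right _ _ hY, div_eq_mul_inv]; exact A.mul_mem ht₁ hu.2.2
    rcases h.dich t₁ ht₁ with hu | ⟨q, hq, q', hq', eq⟩
    · apply h1; rw [ea, eb, mul_div_mul_right _ _ hY, div_eq_mul_inv]; exact A.mul_mem hs₁ hu.2.2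
    rcases hab.dich Y h.memY with hu | ⟨r, hr, r', hr', er⟩
    · exact h.notunY hu
    simp only [mul_zero, zero_add] at ep eq
    refine h.ne_one 0 A.zero_mem (r * p' + r' * q')
      (A.add_mem (A.mul_mem hr hp') (A.mul_mem hr' hq')) ?_
    have : Y * (r * s₁ + r' * t₁) = Y * 1 := by
      rw [mul_one]; nth_rw 2 [er]; rw [ea, eb]; ring
    have := mul_left_cancel₀ hY this
    rw [← this, ep, eq]; ring
  obtain ⟨w, hw, rfl⟩ : ∃ w ∈ A, Y = w * X := ⟨_, hd, by field_simp⟩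
  have key : ∀ z ∈ A, ¬ Un A z → ∃ s ∈ A, z = s * X := fun z hz hn => by
    rcases h.dich z hz with hu | ⟨s, hs, t, ht, e⟩
    · exact absurd hu hn
    · exact ⟨s + t * w, A.add_mem hs (A.mul_mem ht hw), by rw [e]; ring⟩
  obtain ⟨s, hs, ea⟩ := key a hab.memX hab.notunX
  obtain ⟨t, ht, eb⟩ := key b hab.memY hab.notunY
  by_cases us : Un A s
  · apply h2; rw [ea, eb, mul_div_mul_right _ _ hX0, div_eq_mul_inv]; exact A.mul_mem ht us.2.2
  by_cases ut : Un A t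
  · apply h1; rw [ea, eb, mul_div_mul_right _ _ hX0, div_eq_mul_inv]; exact A.mul_mem hs ut.2.2
  obtain ⟨p, hp, ep⟩ := key s hs us
  obtain ⟨q, hq, eq⟩ := key t ht ut
  rcases hab.dich X h.memX with hu | ⟨r, hr, r', hr', er⟩
  · exact h.notunX hu
  refine h.ne_one (r * p + r' * q) (A.add_mem (A.mul_mem hr hp) (A.mul_mem hr' hq)) 0 A.zero_mem ?_
  have : X * (r * s + r' * t) = X * 1 := by
    rw [mul_one]; nth_rw 2 [er]; rw [ea, eb]; ring
  have := mul_left_cancel₀ hX0 this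
  rw [← this, ep, eq]; ring

end Par

section
variable {a b : L}

lemma loc_symm_le (a b : L) : loc k a b ≤ loc k b a := by
  rintro z ⟨f, g, hg, h⟩
  have e : ∀ f : MvPolynomial (Fin 2) k,
      aeval ![b, a] (rename (Equiv.swap (0 : Fin 2) 1) f) = aeval ![a, b] f := by
    intro f
    rw [aeval_rename]
    congr 2
    ext i; fin_cases i <;> simp
  refine ⟨rename (Equiv.swap 0 1) f, rename (Equiv.swap 0 1) g, ?_, ?_⟩
  · rwa [constantCoeff_rename]
  · rw [e, e, h]

lemma loc_symm (a b : L) : loc k a b = loc k b a :=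
  le_antisymm (loc_symm_le a b) (loc_symm_le b a)

lemma aeval_ne_zero (h : AlgebraicIndependent k ![a, b]) {g : MvPolynomial (Fin 2) k}
    (hg : g ≠ 0) : aeval ![a, b] g ≠ 0 := fun e => hg (h (by simpa using e))

lemma ne_zero_of_cc {g : MvPolynomial (Fin 2) k} (hg : constantCoeff g ≠ 0) : g ≠ 0 := by
  rintro rfl; simp at hg

/-- Every element of the local ring has a constant term in `k`. -/
lemma loc_decomp (h : AlgebraicIndependent k ![a, b]) {z : L} (hz : z ∈ loc k a b) :
    ∃ c : k, ∃ s ∈ loc k a b, ∃ t ∈ loc k a b, z = algebraMap k L c + s * a + t * b := by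
  obtain ⟨f, g, hg, e⟩ := hz
  have hg0 := aeval_ne_zero h (ne_zero_of_cc hg)
  obtain ⟨f₁, f₂, hf⟩ := mv_decomp f
  obtain ⟨g₁, g₂, hgd⟩ := mv_decomp g
  set c := constantCoeff f / constantCoeff g with hc
  have hcg : constantCoeff f = c * constantCoeff g := by rw [hc]; field_simp
  refine ⟨c, aeval ![a, b] (f₁ - C c * g₁) / aeval ![a, b] g, ⟨f₁ - C c * g₁, g, hg, ?_⟩,
    aeval ![a, b] (f₂ - C c * g₂) / aeval ![a, b] g, ⟨f₂ - C c * g₂, g, hg, ?_⟩, ?_⟩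
  · field_simp
  · field_simp
  · rw [← mul_left_inj' hg0, e, add_mul, add_mul]
    have : aeval ![a, b] f = aeval ![a, b] (C c * g + (f₁ - C c * g₁) * X 0
        + (f₂ - C c * g₂) * X 1) := by
      congr 1
      rw [hcg, C_mul] at hf
      linear_combination hf - C c * hgd
    rw [this]
    simp only [map_add, map_mul, aeval_X, algHom_C]
    simp
    field_simp

lemma loc_un_cc (h : AlgebraicIndependent k ![a, b]) {g : MvPolynomial (Fin 2) k}
    (hg : constantCoeff g ≠ 0) : Un (loc k a b) (aeval ![a, b] g) := by
  have h0 := aeval_ne_zero h (ne_zero_of_cc hg)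
  exact ⟨aeval_mem_loc a b g, h0, 1, g, hg, by simp [h0]⟩

lemma loc_par (h : AlgebraicIndependent k ![a, b]) : Par (loc k a b) a b where
  memX := loc_memX a b
  memY := loc_memY a b
  ne_one := by
    rintro s ⟨f, g, hg, e⟩ t ⟨f', g', hg', e'⟩ h1
    have : aeval ![a, b] (f * g' * X 0 + f' * g * X 1 - g * g') = 0 := by
      simp only [map_add, map_sub, map_mul, aeval_X, ← e, ← e']
      simp
      linear_combination aeval ![a, b] g * aeval ![a, b] g' * h1
    have := h (by rw [this, map_zero] : aeval ![a, b] _ = aeval ![a, b] 0)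
    have := congrArg constantCoeff this
    simp at this
    tauto
  dich := by
    rintro z ⟨f, g, hg, e⟩
    have hg0 := aeval_ne_zero h (ne_zero_of_cc hg)
    by_cases hf : constantCoeff f = 0
    · right
      obtain ⟨f₁, f₂, hfd⟩ := mv_decomp f
      refine ⟨aeval ![a, b] f₁ / aeval ![a, b] g, ⟨f₁, g, hg, by field_simp⟩,
        aeval ![a, b] f₂ / aeval ![a, b] g, ⟨f₂, g, hg, by field_simp⟩, ?_⟩
      rw [← mul_left_inj' hg0, e, hfd, hf]
      simp
      field_simp
    · left
      have := (loc_un_cc h hf).mul (loc_un_cc h hg).inv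
      convert this using 1
      rw [← e]; field_simp

lemma loc_not_dvd (h : AlgebraicIndependent k ![a, b]) : a / b ∉ loc k a b := by
  rintro ⟨f, g, hg, e⟩
  have hb : b ≠ 0 := by simpa using h.ne_zero 1
  have : aeval ![a, b] (X 0 * g) = aeval ![a, b] (X 1 * f) := by
    simp only [map_mul, aeval_X, ← e]
    simp
    field_simp
  have := h this
  have hd : (X 1 : MvPolynomial (Fin 2) k) ∣ X 0 * g := ⟨f, this⟩
  rcases (X_prime : Prime (X (1 : Fin 2) : MvPolynomial (Fin 2) k)).dvd_or_dvd hd with h1 | ⟨q, hq⟩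
  · rw [X_dvd_X] at h1
    simp at h1
  · rw [hq] at hg; simp at hg

lemma algInd_symm (h : AlgebraicIndependent k ![a, b]) : AlgebraicIndependent k ![b, a] := by
  have := h.comp (Equiv.swap (0 : Fin 2) 1) (Equiv.injective _)
  convert this using 1
  ext i; fin_cases i <;> simp

lemma loc_not_dvd' (h : AlgebraicIndependent k ![a, b]) : b / a ∉ loc k a b := by
  rw [loc_symm]; exact loc_not_dvd (algInd_symm h)

lemma par_not_dvd (h : AlgebraicIndependent k ![a, b]) {x y : L} (hp : Par (loc k a b) x y) :
    y / x ∉ loc k a b :=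
  hp.div_not_mem (loc_par h) (loc_not_dvd h) (loc_not_dvd' h)

/-- `loc k a b` is contained in every subalgebra which contains `a, b` and in which the units of
`loc k a b` remain invertible. -/
lemma loc_le (h : AlgebraicIndependent k ![a, b]) {B : Subalgebra k L} (ha : a ∈ B) (hb : b ∈ B)
    (hinv : ∀ z, Un (loc k a b) z → z ∈ B → z⁻¹ ∈ B) : loc k a b ≤ B := by
  have hm : ∀ f : MvPolynomial (Fin 2) k, aeval ![a, b] f ∈ B := by
    intro f
    induction f using MvPolynomial.induction_on with
    | C a => simp
    | add p q hp hq => rw [map_add]; exact B.add_mem hp hq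
    | mul_X p i hp =>
      rw [map_mul, aeval_X]
      refine B.mul_mem hp ?_
      fin_cases i
      · exact ha
      · exact hb
  rintro z ⟨f, g, hg, e⟩
  have hu := loc_un_cc h hg
  have : z = aeval ![a, b] f * (aeval ![a, b] g)⁻¹ := by
    rw [← e, mul_assoc, mul_inv_cancel₀ hu.2.1, mul_one]
  rw [this]
  exact B.mul_mem (hm f) (hinv _ hu (hm g))

end
end Loc
end MonomCex

/-! ### Regularity, unique factorization and dimension -/

namespace MonomCex
open LocalMonomial MvPolynomial

section LocRing
variable {k L : Type*} [Field k] [Field L] [Algebra k L] {a b : L}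

/-- The parametrisation of polynomials in `a, b` by polynomials in two variables, with values in
the local ring at the origin. -/
def toLoc (k : Type*) {L : Type*} [Field k] [Field L] [Algebra k L] (a b : L) :
    MvPolynomial (Fin 2) k →ₐ[k] loc k a b :=
  (aeval ![a, b]).codRestrict _ (aeval_mem_loc a b)

lemma coe_toLoc (f : MvPolynomial (Fin 2) k) : (toLoc k a b f : L) = aeval ![a, b] f := rfl

/-- Polynomials with nonzero constant term. -/
def ccSub (k : Type*) [Field k] : Submonoid (MvPolynomial (Fin 2) k) :=
  (nonZeroDivisors k).comap (constantCoeff : MvPolynomial (Fin 2) k →+* k)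

lemma mem_ccSub {f : MvPolynomial (Fin 2) k} : f ∈ ccSub k ↔ constantCoeff f ≠ 0 := by
  simp [ccSub]

lemma un_iff {A : Subalgebra k L} (z : A) : IsUnit z ↔ Un A (z : L) := by
  constructor
  · rintro ⟨u, rfl⟩
    have h1 : (u : A).1 * ((u⁻¹ : Aˣ) : A).1 = 1 := by
      rw [← A.coe_mul, Units.mul_inv]; rfl
    refine ⟨(u : A).2, left_ne_zero_of_mul_eq_one h1, ?_⟩
    rw [inv_eq_of_mul_eq_one_right h1]
    exact ((u⁻¹ : Aˣ) : A).2
  · rintro ⟨_, h0, h1⟩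
    exact IsUnit.of_mul_eq_one ⟨_, h1⟩ (Subtype.ext (mul_inv_cancel₀ h0))

lemma loc_isLocalization (h : AlgebraicIndependent k ![a, b]) :
    letI := (toLoc k a b).toRingHom.toAlgebra
    IsLocalization (ccSub k) (loc k a b) := by
  let := (toLoc k a b).toRingHom.toAlgebra
  have hal : ∀ f, ((algebraMap (MvPolynomial (Fin 2) k) (loc k a b) f : loc k a b) : L)
    = aeval ![a, b] f := fun f => rfl
  refine ⟨fun f => ?_, fun z => ?_, fun {f g} e => ?_⟩
  · rw [un_iff, hal]
    exact loc_un_cc h (mem_ccSub.1 f.2)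
  · obtain ⟨f, g, hg, e⟩ := z.2
    exact ⟨(f, ⟨g, mem_ccSub.2 hg⟩), Subtype.ext (by rw [Subalgebra.coe_mul, hal, hal]; exact e)⟩
  · have : aeval ![a, b] f = aeval ![a, b] g := by rw [← hal, ← hal, e]
    exact ⟨1, by rw [h this]⟩

lemma ccSub_le : ccSub k ≤ nonZeroDivisors (MvPolynomial (Fin 2) k) := fun f hf =>
  mem_nonZeroDivisors_of_ne_zero (ne_zero_of_cc (mem_ccSub.1 hf))

lemma loc_noeth (h : AlgebraicIndependent k ![a, b]) : IsNoetherianRing (loc k a b) := by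
  let := (toLoc k a b).toRingHom.toAlgebra
  have := loc_isLocalization h
  exact IsLocalization.isNoetherianRing (ccSub k) _ inferInstance

lemma loc_ufd (h : AlgebraicIndependent k ![a, b]) : UniqueFactorizationMonoid (loc k a b) := by
  let := (toLoc k a b).toRingHom.toAlgebra
  have := loc_isLocalization h
  exact UniqueFactorizationMonoid.of_isLocalization (ccSub k) _ 

lemma Par.isLocalRing {A : Subalgebra k L} {X Y : L} (h : Par A X Y) : IsLocalRing A := by
  have : Nontrivial A := inferInstance
  refine IsLocalRing.of_nonunits_add fun z w hz hw => ?_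
  simp only [mem_nonunits_iff, un_iff] at *
  obtain ⟨s, hs, t, ht, e⟩ := (h.dich z z.2).resolve_left hz
  obtain ⟨s', hs', t', ht', e'⟩ := (h.dich w w.2).resolve_left hw
  intro hu
  refine h.not_un (A.add_mem hs hs') (A.add_mem ht ht') ?_
  convert hu using 1
  rw [Subalgebra.coe_add, e, e']; ring

lemma mem_span_pair {A : Subalgebra k L} (X Y z : A) :
    z ∈ Ideal.span {X, Y} ↔ ∃ s ∈ A, ∃ t ∈ A, (z : L) = s * (X : L) + t * (Y : L) := by
  rw [Ideal.mem_span_pair]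
  constructor
  · rintro ⟨s, t, rfl⟩; exact ⟨s, s.2, t, t.2, by simp⟩
  · rintro ⟨s, hs, t, ht, e⟩; exact ⟨⟨s, hs⟩, ⟨t, ht⟩, Subtype.ext (by simp [e])⟩

/-- `Par` expresses that the two elements generate the ideal of nonunits. -/
lemma par_iff {A : Subalgebra k L} (X Y : A) :
    Par A (X : L) (Y : L) ↔ ∀ z : A, z ∈ Ideal.span {X, Y} ↔ z ∈ nonunits A := by
  constructor
  · intro h z
    rw [mem_span_pair, mem_nonunits_iff, un_iff]
    constructor
    · rintro ⟨s, hs, t, ht, e⟩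
      rw [e]; exact h.not_un hs ht
    · exact (h.dich z z.2).resolve_left
  · intro h
    refine ⟨X.2, Y.2, fun s hs t ht e => ?_, fun z hz => ?_⟩
    · have := (h 1).1 ((mem_span_pair X Y 1).2 ⟨s, hs, t, ht, by simp [e]⟩)
      simp at this
    · by_cases hu : Un A z
      · exact Or.inl hu
      · right
        have := (h ⟨z, hz⟩).2 (by rw [mem_nonunits_iff, un_iff]; exact hu)
        exact (mem_span_pair X Y _).1 this

lemma Par.maximalIdeal_eq {A : Subalgebra k L} {X Y : L} (h : Par A X Y) [IsLocalRing A] :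
    IsLocalRing.maximalIdeal A = Ideal.span {⟨X, h.memX⟩, ⟨Y, h.memY⟩} := by
  ext z
  rw [IsLocalRing.mem_maximalIdeal, (par_iff ⟨X, h.memX⟩ ⟨Y, h.memY⟩).1 h]

/-- A regular parameter is irreducible, as it does not lie in the square of the maximal ideal. -/
lemma par_prime (h : AlgebraicIndependent k ![a, b]) {x y : L} (hp : Par (loc k a b) x y) :
    Prime (⟨x, hp.memX⟩ : loc k a b) := by
  have := loc_ufd h
  set A := loc k a b
  have nd := par_not_dvd h hp
  have nd' := par_not_dvd h hp.symm
  have hx0 : x ≠ 0 := by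
    rintro rfl; apply nd'; simp [A.zero_mem]
  have hy0 : y ≠ 0 := by
    rintro rfl; apply nd; simp [A.zero_mem]
  refine Irreducible.prime ⟨?_, ?_⟩
  · rw [un_iff]; exact hp.notunX
  · rintro s t e
    by_contra! hc
    rw [un_iff, un_iff] at hc
    obtain ⟨s₁, hs₁, s₂, hs₂, es⟩ := (hp.dich s s.2).resolve_left hc.1
    obtain ⟨t₁, ht₁, t₂, ht₂, et⟩ := (hp.dich t t.2).resolve_left hc.2
    have e' : x = s * (t : L) := congrArg Subtype.val e
    have hu : Un A (1 + (-(s₁ * t₁)) * x + (-(s₁ * t₂ + s₂ * t₁)) * y) :=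
      hp.un_add (Un.one A) (A.neg_mem (A.mul_mem hs₁ ht₁))
        (A.neg_mem (A.add_mem (A.mul_mem hs₁ ht₂) (A.mul_mem hs₂ ht₁)))
    apply nd'
    have : x / y = (s₂ * t₂ * y) * (1 + (-(s₁ * t₁)) * x + (-(s₁ * t₂ + s₂ * t₁)) * y)⁻¹ := by
      have h0 := hu.2.1
      rw [← div_eq_mul_inv, div_eq_div_iff hy0 h0]
      rw [es, et] at e'
      linear_combination e'
    rw [this]
    exact A.mul_mem (A.mul_mem (A.mul_mem hs₂ ht₂) hp.memY) hu.2.2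

lemma loc_dim (h : AlgebraicIndependent k ![a, b]) : ringKrullDim (loc k a b) = 2 := by
  have := loc_noeth h
  have hp := loc_par h
  have := hp.isLocalRing
  have hpr := par_prime h hp
  rw [← IsLocalRing.maximalIdeal_height_eq_ringKrullDim]
  have up : (IsLocalRing.maximalIdeal (loc k a b)).height ≤ 2 := by
    classical
    have := Ideal.height_le_card_of_mem_minimalPrimes_span_finset
      (p := IsLocalRing.maximalIdeal (loc k a b)) (s := {⟨a, hp.memX⟩, ⟨b, hp.memY⟩}) (by
        simp only [Finset.coe_insert, Finset.coe_singleton]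
        rw [← hp.maximalIdeal_eq, Ideal.minimalPrimes_eq_subsingleton_self]; rfl)
    refine this.trans ?_
    exact_mod_cast Finset.card_le_two
  set P : Ideal (loc k a b) := Ideal.span {⟨a, hp.memX⟩} with hP
  have : P.IsPrime := (Ideal.span_singleton_prime hpr.ne_zero).2 hpr
  have h1 : (⊥ : Ideal (loc k a b)) < P := by
    rw [bot_lt_iff_ne_bot, hP, Ne, Ideal.span_singleton_eq_bot]; exact hpr.ne_zero
  have h2 : P < IsLocalRing.maximalIdeal (loc k a b) := by
    refine lt_of_le_of_ne (IsLocalRing.le_maximalIdeal (Ideal.IsPrime.ne_top ‹_›)) ?_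
    intro e
    have : (⟨b, hp.memY⟩ : loc k a b) ∈ P := by
      rw [e, hp.maximalIdeal_eq]; exact Ideal.subset_span (by simp)
    rw [hP, Ideal.mem_span_singleton] at this
    obtain ⟨w, hw⟩ := this
    apply par_not_dvd h hp
    have hw' : b = a * w := congrArg Subtype.val hw
    have : a ≠ 0 := fun e => hpr.ne_zero (Subtype.ext e)
    rw [(div_eq_iff this).2 (hw'.trans (mul_comm _ _))]; exact w.2
  have lo : 2 ≤ (IsLocalRing.maximalIdeal (loc k a b)).height := by
    have a1 := Ideal.height_add_one_le_of_lt_of_isPrime h1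
    have a2 := Ideal.height_add_one_le_of_lt_of_isPrime h2
    calc (2 : ℕ∞) = 0 + 1 + 1 := by norm_num
      _ ≤ (⊥ : Ideal (loc k a b)).height + 1 + 1 := by gcongr; exact zero_le
      _ ≤ P.height + 1 := by gcongr
      _ ≤ _ := a2
  rw [le_antisymm up lo]; rfl

lemma loc_regular (h : AlgebraicIndependent k ![a, b]) : IsRegularLocal (loc k a b) := by
  classical
  have hp := loc_par h
  refine ⟨loc_noeth h, hp.isLocalRing, {⟨a, hp.memX⟩, ⟨b, hp.memY⟩}, ?_, ?_⟩
  · intro z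
    rw [← (par_iff ⟨a, hp.memX⟩ ⟨b, hp.memY⟩).1 hp]
    simp
  · rw [loc_dim h, Finset.card_pair]
    · rfl
    · intro e
      have e' : a = b := congrArg Subtype.val e
      have h0 : a ≠ 0 := by simpa using h.ne_zero 0
      apply loc_not_dvd h
      rw [(by rw [← e', div_self h0] : a / b = 1)]; exact (loc k a b).one_mem

lemma loc_essFin (h : AlgebraicIndependent k ![a, b]) : EssFinType (loc k a b) := by
  have hp := loc_par h
  have := hp.isLocalRing
  have hle : Algebra.adjoin k {a, b} ≤ loc k a b := Algebra.adjoin_le (by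
    rintro z (rfl | rfl)
    · exact hp.memX
    · exact hp.memY)
  have hpoly : ∀ f : MvPolynomial (Fin 2) k, aeval ![a, b] f ∈ Algebra.adjoin k {a, b} := by
    intro f
    have := (aeval (R := k) ![a, b]).mem_range_self f
    rw [← Algebra.adjoin_range_eq_range_aeval] at this
    simpa [Matrix.range_cons, Set.pair_comm] using this
  refine ⟨Algebra.adjoin k {a, b}, Subalgebra.fg_def.2 ⟨{a, b}, by simp, rfl⟩,
    (IsLocalRing.maximalIdeal (loc k a b)).comap (Subalgebra.inclusion hle), inferInstance, ?_⟩
  have hmem : ∀ s : Algebra.adjoin k {a, b},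
      s ∉ (IsLocalRing.maximalIdeal (loc k a b)).comap (Subalgebra.inclusion hle) ↔
      Un (loc k a b) (s : L) := by
    intro s
    rw [Ideal.mem_comap, IsLocalRing.mem_maximalIdeal, mem_nonunits_iff, not_not, un_iff]
    rfl
  intro z
  constructor
  · rintro ⟨f, g, hg, e⟩
    exact ⟨⟨_, hpoly f⟩, ⟨_, hpoly g⟩, (hmem _).2 (loc_un_cc h hg), e⟩
  · rintro ⟨f, s, hs, e⟩
    have hs := (hmem s).1 hs
    have : z = f * (s : L)⁻¹ := by rw [← e, mul_assoc, mul_inv_cancel₀ hs.2.1, mul_one]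
    rw [this]
    exact (loc k a b).mul_mem (hle f.2) hs.2.2

lemma loc_frac (h : AlgebraicIndependent k ![a, b]) :
    HasFractionField (loc k a b) (IntermediateField.adjoin k {a, b} : Set L) := by
  have hr : Set.range ![a, b] = {a, b} := by simp [Matrix.range_cons, Set.pair_comm]
  have hpoly : ∀ z : L, z ∈ IntermediateField.adjoin k {a, b} ↔ ∃ r s : MvPolynomial (Fin 2) k,
      z = aeval ![a, b] r / aeval ![a, b] s := by
    intro z
    rw [← hr]
    exact IntermediateField.mem_adjoin_range_iff ..
  constructor
  · rintro z ⟨f, g, hg, e⟩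
    exact (hpoly z).2 ⟨f, g, by
      rw [← e, mul_div_cancel_right₀ _ (aeval_ne_zero h (ne_zero_of_cc hg))]⟩
  · intro z hz
    obtain ⟨r, s, rfl⟩ := (hpoly z).1 hz
    by_cases h0 : aeval ![a, b] s = 0
    · exact ⟨0, Subalgebra.zero_mem _, 1, Subalgebra.one_mem _, one_ne_zero, by simp [h0]⟩
    · exact ⟨_, aeval_mem_loc a b r, _, aeval_mem_loc a b s, h0, rfl⟩

/-- A regular system of parameters of a local ring of the plane has two members, and they satisfy
the elementwise description `Par`. -/
lemma rsp_par (h : AlgebraicIndependent k ![a, b]) {m : ℕ} {u : Fin m → loc k a b}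
    (hu : IsRegularSystemOfParameters u) :
    ∃ e : m = 2, Par (loc k a b) (u (Fin.cast e.symm 0) : L) (u (Fin.cast e.symm 1)) := by
  have hm : m = 2 := by
    have := hu.2
    rw [loc_dim h] at this
    exact_mod_cast this
  subst hm
  refine ⟨rfl, (par_iff _ _).2 fun z => ?_⟩
  rw [← hu.1]
  have : Set.range u = {u 0, u 1} := by
    ext z
    simp [Fin.exists_fin_two, eq_comm]
  rw [this]; rfl

/-- `π` is a prime element of the subring `A` of `L`; divisibility is phrased in `L`. -/
structure PrimeIn (A : Subalgebra k L) (π : L) : Prop where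
  mem : π ∈ A
  ne_zero : π ≠ 0
  inv_not_mem : π⁻¹ ∉ A
  dvd_or_dvd : ∀ f ∈ A, ∀ g ∈ A, f * g / π ∈ A → f / π ∈ A ∨ g / π ∈ A

lemma par_primeIn (h : AlgebraicIndependent k ![a, b]) {x y : L} (hp : Par (loc k a b) x y) :
    PrimeIn (loc k a b) x := by
  have hpr := par_prime h hp
  have h0 : x ≠ 0 := fun e => hpr.ne_zero (Subtype.ext e)
  have hd : ∀ f : loc k a b, (⟨x, hp.memX⟩ : loc k a b) ∣ f ↔ (f : L) / x ∈ loc k a b := by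
    intro f
    constructor
    · rintro ⟨w, rfl⟩
      rw [Subalgebra.coe_mul, mul_div_cancel_left₀ _ h0]; exact w.2
    · intro hf
      exact ⟨⟨_, hf⟩, Subtype.ext (mul_div_cancel₀ _ h0).symm⟩
  refine ⟨hp.memX, h0, fun hi => hp.notunX ⟨hp.memX, h0, hi⟩, fun f hf g hg hfg => ?_⟩
  have := hpr.dvd_or_dvd (a := ⟨f, hf⟩) (b := ⟨g, hg⟩) ((hd _).2 hfg)
  rwa [hd, hd] at this

end LocRing
end MonomCex

/-! ### Monoidal transforms along a valuation -/

namespace MonomCex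
open LocalMonomial MvPolynomial

section MT
variable {k L : Type*} [Field k] [Field L] [Algebra k L] {a b : L}

lemma dom_trans {A B C : Set L} (h : DominatesSet C B) (h' : DominatesSet B A) :
    DominatesSet C A :=
  ⟨h'.1.trans h.1, fun x hx h0 hi => h'.2 x hx h0 (h.2 x (h'.1 hx) h0 hi)⟩

/-- `z` lies in the maximal ideal of the local ring `A`. -/
def NU (A : Subalgebra k L) (z : L) : Prop := z ∈ A ∧ ¬ Un A z

namespace Par
variable {A : Subalgebra k L} {X Y : L}

lemma nuX (h : Par A X Y) : NU A X := ⟨h.memX, h.notunX⟩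
lemma nuY (h : Par A X Y) : NU A Y := ⟨h.memY, h.notunY⟩
lemma nu_mul (h : Par A X Y) {s z : L} (hs : s ∈ A) (hz : NU A z) : NU A (s * z) :=
  ⟨A.mul_mem hs hz.1, fun hu => hz.2 (h.un_of_mul hz.1 hs (by rwa [mul_comm]))⟩
lemma nu_add (h : Par A X Y) {y z : L} (hy : NU A y) (hz : NU A z) : NU A (y + z) := by
  refine ⟨A.add_mem hy.1 hz.1, ?_⟩
  obtain ⟨s, hs, t, ht, rfl⟩ := (h.dich _ hy.1).resolve_left hy.2
  obtain ⟨s', hs', t', ht', rfl⟩ := (h.dich _ hz.1).resolve_left hz.2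
  have := h.not_un (A.add_mem hs hs') (A.add_mem ht ht')
  convert this using 2
  ring
lemma un_add_nu (h : Par A X Y) {y z : L} (hy : Un A y) (hz : NU A z) : Un A (y + z) := by
  obtain ⟨s, hs, t, ht, rfl⟩ := (h.dich _ hz.1).resolve_left hz.2
  rw [← add_assoc]; exact h.un_add hy hs ht
lemma nu_sub (h : Par A X Y) {y z : L} (hy : NU A y) (hz : NU A z) : NU A (y - z) := by
  have := h.nu_add hy (h.nu_mul (A.neg_mem A.one_mem) hz)
  convert this using 1; ring
lemma nu_pow (h : Par A X Y) {z : L} (hz : NU A z) {n : ℕ} (hn : n ≠ 0) : NU A (z ^ n) := by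
  obtain ⟨n, rfl⟩ := Nat.exists_eq_succ_of_ne_zero hn
  rw [pow_succ]; exact h.nu_mul (A.pow_mem hz.1 n) hz
end Par

lemma nu_zero (A : Subalgebra k L) : NU A 0 := ⟨A.zero_mem, fun h => h.2.1 rfl⟩

/-- A local ring of the plane with parameters in the maximal ideal of a local ring `B` is
dominated by `B`. -/
lemma loc_dom {B : Subalgebra k L} {X Y : L} (h : AlgebraicIndependent k ![a, b])
    (hB : Par B X Y) (ha : NU B a) (hb : NU B b) :
    DominatesSet (B : Set L) (loc k a b : Set L) := by
  have hle : loc k a b ≤ B := by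
    have hm : ∀ f : MvPolynomial (Fin 2) k, aeval ![a, b] f ∈ B := by
      intro f
      induction f using MvPolynomial.induction_on with
      | C a => simp
      | add p q hp hq => rw [map_add]; exact B.add_mem hp hq
      | mul_X p i hp =>
        rw [map_mul, aeval_X]
        refine B.mul_mem hp ?_
        fin_cases i
        · exact ha.1
        · exact hb.1
    rintro z ⟨f, g, hg, e⟩
    have hu : Un B (aeval ![a, b] g) := by
      obtain ⟨f₁, f₂, hf⟩ := mv_decomp g
      rw [hf, map_add, map_add, map_mul, map_mul, aeval_X, aeval_X, algHom_C, add_assoc]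
      exact hB.un_add_nu (Un.C B hg) (hB.nu_add (hB.nu_mul (hm _) ha) (hB.nu_mul (hm _) hb))
    rw [(by rw [← e, mul_assoc, mul_inv_cancel₀ hu.2.1, mul_one] :
      z = aeval ![a, b] f * (aeval ![a, b] g)⁻¹)]
    exact B.mul_mem (hm f) hu.2.2
  refine ⟨hle, fun z hz h0 hi => ?_⟩
  rcases (loc_par h).dich z hz with hu | ⟨s, hs, t, ht, rfl⟩
  · exact hu.2.2
  · exact absurd ⟨hle hz, h0, hi⟩
      (hB.nu_add (hB.nu_mul (hle hs) ha) (hB.nu_mul (hle ht) hb)).2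

/-- The only local rings dominated by `ω` that arise from `A = loc a b` by one monoidal transform
are `A` itself (when the centre is principal) and the local ring `loc k x' b` of the blowup of the
closed point at the centre of `ω`. -/
lemma mt_step {x' : L} {c : k} (h : AlgebraicIndependent k ![a, b])
    (h' : AlgebraicIndependent k ![x', b]) (e : a = b * (x' + algebraMap k L c))
    {ω : Set L} (hω : DominatesSet ω (loc k x' b : Set L)) {A' : Subalgebra k L}
    (hA' : IsMonoidalTransform (loc k a b) A') (hωA' : DominatesSet ω (A' : Set L)) :
    A' = loc k a b ∨ A' = loc k x' b := by
  have hB := loc_par h'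
  have hp := loc_par h
  have hAB : DominatesSet (loc k x' b : Set L) (loc k a b : Set L) := by
    refine loc_dom h hB ?_ hB.nuY
    rw [e, mul_comm]
    exact hB.nu_mul (Subalgebra.add_mem _ (loc_memX _ _) (mem_C _ c)) hB.nuY
  have hωA := dom_trans hω hAB
  obtain ⟨P, hP, -, x, hxP, hx0, hAd'⟩ := hA'
  set Ad := Algebra.adjoin k ((loc k a b : Set L) ∪ {y : L | ∃ p ∈ P, y * (x : L) = (p : L)})
    with hAd
  obtain ⟨Q, hQ, hloc, hdom⟩ := hAd'
  have hAdA' : ∀ y : Ad, (y : L) ∈ A' := fun y => (hloc y).2 ⟨y, 1, fun h1 =>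
    hQ.ne_top ((Ideal.eq_top_iff_one Q).2 h1), by simp⟩
  have hdiv : ∀ p ∈ P, (p : L) / x ∈ A' := fun p hpP =>
    hAdA' ⟨_, Algebra.subset_adjoin (Or.inr ⟨p, hpP, div_mul_cancel₀ _ hx0⟩)⟩
  -- a local ring dominated by `ω` and containing the chart of the blowup contains `A'`
  have hsub : ∀ B : Subalgebra k L, DominatesSet ω (B : Set L) → loc k a b ≤ B →
      (∀ p ∈ P, (p : L) / x ∈ B) → A' ≤ B := by
    intro B hωB hle hdv w hw
    have hAdB : Ad ≤ B := Algebra.adjoin_le (by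
      rintro y (hy | ⟨p, hpP, hy⟩)
      · exact hle hy
      · rw [(eq_div_iff hx0).2 hy]; exact hdv p hpP)
    obtain ⟨f, s, hs, hw⟩ := (hloc w).1 hw
    have hs0 : (s : L) ≠ 0 := fun h0 => hs (by rw [(Subtype.ext h0 : s = 0)]; exact Q.zero_mem)
    have hsi : (s : L)⁻¹ ∈ A' := (hloc _).2 ⟨1, s, hs, by simp [hs0]⟩
    have : (s : L)⁻¹ ∈ B := hωB.2 _ (hAdB s.2) hs0 (hωA'.1 hsi)
    rw [(eq_div_iff hs0).2 hw, div_eq_mul_inv]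
    exact B.mul_mem (hAdB f.2) this
  have := loc_ufd h
  have := loc_noeth h
  have := hp.isLocalRing
  have hP0 : P ≠ ⊥ := by
    rintro rfl
    exact hx0 (congrArg Subtype.val (Ideal.mem_bot.1 hxP))
  obtain ⟨π, hπP, hπ⟩ := hP.exists_mem_prime_of_ne_bot hP0
  have hπ0 : (π : L) ≠ 0 := fun h0 => hπ.ne_zero (Subtype.ext h0)
  by_cases hprin : P ≤ Ideal.span {π}
  · left
    obtain ⟨r, hr⟩ := Ideal.mem_span_singleton.1 (hprin hxP)
    have hr' : (x : L) = π * r := congrArg Subtype.val hr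
    have hr0 : (r : L) ≠ 0 := fun h0 => hx0 (by rw [hr', h0, mul_zero])
    have hri : (r : L)⁻¹ ∈ loc k a b := by
      refine hωA.2 _ r.2 hr0 (hωA'.1 ?_)
      have := hdiv π hπP
      rwa [hr', div_mul_cancel_left₀ hπ0] at this
    refine le_antisymm (hsub _ hωA le_rfl fun p hpP => ?_) hdom.1
    obtain ⟨q, rfl⟩ := Ideal.mem_span_singleton.1 (hprin hpP)
    rw [Subalgebra.coe_mul, hr', mul_div_mul_left _ _ hπ0, div_eq_mul_inv]
    exact Subalgebra.mul_mem _ q.2 hri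
  · right
    have hPm : P = IsLocalRing.maximalIdeal (loc k a b) := by
      by_contra hne
      have h3 := Ideal.height_add_one_le_of_lt_of_isPrime
        (lt_of_le_of_ne (IsLocalRing.le_maximalIdeal hP.ne_top) hne)
      have : (Ideal.span {π}).IsPrime := (Ideal.span_singleton_prime hπ.ne_zero).2 hπ
      have h2 := Ideal.height_add_one_le_of_lt_of_isPrime (I := Ideal.span {π}) (J := P)
        (lt_of_le_not_ge ((Ideal.span_singleton_le_iff_mem _).2 hπP) hprin)
      have h1 := Ideal.height_add_one_le_of_lt_of_isPrime (I := (⊥ : Ideal (loc k a b)))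
        (J := Ideal.span {π}) (by
          rw [bot_lt_iff_ne_bot, Ne, Ideal.span_singleton_eq_bot]; exact hπ.ne_zero)
      have hd : ((IsLocalRing.maximalIdeal (loc k a b)).height : WithBot ℕ∞) = 2 := by
        rw [IsLocalRing.maximalIdeal_height_eq_ringKrullDim, loc_dim h]
      have hd' : (IsLocalRing.maximalIdeal (loc k a b)).height = 2 :=
        WithBot.coe_injective (hd.trans rfl)
      rw [hd'] at h3
      have h4 : (0 : ℕ∞) + 1 + 1 + 1 ≤ 2 :=
        calc (0 : ℕ∞) + 1 + 1 + 1 ≤ (⊥ : Ideal (loc k a b)).height + 1 + 1 + 1 := by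
              gcongr; exact zero_le
          _ ≤ (Ideal.span {π}).height + 1 + 1 := by gcongr
          _ ≤ P.height + 1 := by gcongr
          _ ≤ 2 := h3
      exact absurd h4 (by decide)
    have hle : loc k a b ≤ loc k x' b := hAB.1
    have hbP : (⟨b, hp.memY⟩ : loc k a b) ∈ P := by
      rw [hPm, hp.maximalIdeal_eq]; exact Ideal.subset_span (by simp)
    have haP : (⟨a, hp.memX⟩ : loc k a b) ∈ P := by
      rw [hPm, hp.maximalIdeal_eq]; exact Ideal.subset_span (by simp)
    have hb0 : b ≠ 0 := by simpa using h.ne_zero 1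
    -- every element of the maximal ideal of `A` is divisible by `b` in `B`
    have hfac : ∀ p ∈ P, ∃ T ∈ loc k x' b, (p : L) = b * T := by
      intro p hpP
      rw [hPm, hp.maximalIdeal_eq, mem_span_pair] at hpP
      obtain ⟨s, hs, t, ht, hpe⟩ := hpP
      refine ⟨s * (x' + algebraMap k L c) + t, ?_, ?_⟩
      · exact Subalgebra.add_mem _ (Subalgebra.mul_mem _ (hle hs)
          (Subalgebra.add_mem _ (loc_memX _ _) (mem_C _ c))) (hle ht)
      · rw [hpe]; simp only; rw [e]; ring
    obtain ⟨T, hT, hxT⟩ := hfac x hxP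
    have hT0 : T ≠ 0 := by rintro rfl; exact hx0 (by rw [hxT, mul_zero])
    have hTA' : T⁻¹ ∈ A' := by
      have := hdiv _ hbP
      rwa [hxT, div_mul_cancel_left₀ hb0] at this
    have hTi : T⁻¹ ∈ loc k x' b := hω.2 _ hT hT0 (hωA'.1 hTA')
    have hTA'' : T ∈ A' := by
      have := hωA'.2 _ hTA' (inv_ne_zero hT0) (by rw [inv_inv]; exact hω.1 hT)
      rwa [inv_inv] at this
    refine le_antisymm (hsub _ hω hle fun p hpP => ?_) (loc_le h' ?_ (hdom.1 hp.memY) ?_)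
    · obtain ⟨T', hT', hpe⟩ := hfac p hpP
      rw [hpe, hxT, mul_div_mul_left _ _ hb0, div_eq_mul_inv]
      exact Subalgebra.mul_mem _ hT' hTi
    · have h1 := A'.sub_mem (A'.mul_mem (hdiv _ haP) hTA'') (mem_C A' c)
      convert h1 using 1
      rw [hxT]
      simp only
      rw [e]
      field_simp
      ring
    · intro z hz hzA'
      exact hωA'.2 z hzA' hz.2.1 (hω.1 hz.2.2)

lemma mt_dom {A A' : Subalgebra k L} (h : IsMonoidalTransform A A') :
    DominatesSet (A' : Set L) (A : Set L) := by
  obtain ⟨P, -, -, x, -, -, Q, -, -, hd⟩ := h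
  exact hd

/-- If the only monoidal transforms along `ω` of each member of a sequence are that member and the
next one, then iterated monoidal transforms along `ω` stay in the sequence. -/
lemma mt_chain {C : ℕ → Subalgebra k L} {ω : Set L}
    (hC : ∀ n A', IsMonoidalTransform (C n) A' → DominatesSet ω (A' : Set L) →
      A' = C n ∨ A' = C (n + 1)) {A' : Subalgebra k L}
    (h : Relation.ReflTransGen (IsMonoidalTransform (k := k) (F := L)) (C 0) A')
    (hω : DominatesSet ω (A' : Set L)) : ∃ n, A' = C n := by
  induction h with
  | refl => exact ⟨0, rfl⟩
  | tail _ hs ih =>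
    obtain ⟨n, rfl⟩ := ih (dom_trans hω (mt_dom hs))
    rcases hC n _ hs hω with h1 | h1
    · exact ⟨n, h1⟩
    · exact ⟨n + 1, h1⟩

end MT
end MonomCex

/-! ### Stages and the passage to the next stage -/

namespace MonomCex
open LocalMonomial MvPolynomial

section Stages
variable {k L : Type*} [Field k] [Field L] [Algebra k L]

open scoped IntermediateField.algebraAdjoinAdjoin in
/-- Since the transcendence degree of `L` is two, any two elements generating a subfield over which
`L` is algebraic are algebraically independent. -/
lemma algInd_of_isAlgebraic {a b c d : L} (h : AlgebraicIndependent k ![a, b])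
    (halg : Algebra.IsAlgebraic (IntermediateField.adjoin k {c, d}) L) :
    AlgebraicIndependent k ![c, d] := by
  have hr : Set.range ![c, d] = {c, d} := by simp [Matrix.range_cons, Set.pair_comm]
  have : Algebra.IsAlgebraic (Algebra.adjoin k (Set.range ![c, d])) L := by
    rw [hr]
    exact (IsFractionRing.comap_isAlgebraic_iff (K := IntermediateField.adjoin k {c, d})).2 halg
  exact (Algebra.IsAlgebraic.isTranscendenceBasis_of_lift_le_trdeg_of_finite k ![c, d]
    h.lift_cardinalMk_le_trdeg).1

lemma adjoin_pair_le {a b : L} {K : IntermediateField k L} :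
    IntermediateField.adjoin k {a, b} ≤ K ↔ a ∈ K ∧ b ∈ K := by
  rw [IntermediateField.adjoin_le_iff]
  simp [Set.insert_subset_iff]

lemma left_mem_adjoin (a b : L) : a ∈ IntermediateField.adjoin k {a, b} :=
  IntermediateField.subset_adjoin k _ (by simp)
lemma right_mem_adjoin (a b : L) : b ∈ IntermediateField.adjoin k {a, b} :=
  IntermediateField.subset_adjoin k _ (by simp)

lemma adjoin_step {a b b' : L} {c : k} (hb : b ≠ 0) (e : a = b ^ 2 * (b' + algebraMap k L c)) :
    IntermediateField.adjoin k {b, b'} = IntermediateField.adjoin k {a, b} := by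
  apply le_antisymm
  · refine adjoin_pair_le.2 ⟨right_mem_adjoin _ _, ?_⟩
    rw [(by rw [e]; field_simp; ring : b' = a / b ^ 2 - algebraMap k L c)]
    exact sub_mem (div_mem (left_mem_adjoin _ _) (pow_mem (right_mem_adjoin _ _) 2))
      (IntermediateField.algebraMap_mem _ c)
  · refine adjoin_pair_le.2 ⟨?_, left_mem_adjoin _ _⟩
    rw [e]
    exact mul_mem (pow_mem (left_mem_adjoin _ _) 2) (add_mem (right_mem_adjoin _ _)
      (IntermediateField.algebraMap_mem _ c))

lemma adjoin_div {a b : L} (hb : b ≠ 0) :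
    IntermediateField.adjoin k {a / b, b} = IntermediateField.adjoin k {a, b} := by
  apply le_antisymm
  · exact adjoin_pair_le.2 ⟨div_mem (left_mem_adjoin _ _) (right_mem_adjoin _ _),
      right_mem_adjoin _ _⟩
  · refine adjoin_pair_le.2 ⟨?_, right_mem_adjoin _ _⟩
    have := mul_mem (left_mem_adjoin (k := k) (a / b) b) (right_mem_adjoin (k := k) (a / b) b)
    rwa [div_mul_cancel₀ _ hb] at this

lemma algInd_div {a b : L} (h : AlgebraicIndependent k ![a, b])
    (halg : Algebra.IsAlgebraic (IntermediateField.adjoin k {a, b}) L) :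
    AlgebraicIndependent k ![a / b, b] := by
  have hb : b ≠ 0 := by simpa using h.ne_zero 1
  refine algInd_of_isAlgebraic h ?_
  rwa [adjoin_div hb]

variable (K : IntermediateField k L)

/-- The numerical shape of an extension `loc u v ⊆ loc x y` that is preserved by following `ω`:
`u = γ x²` and `v = τ y² + x Ω` with `γ, τ, Ω` units, `∂γ/∂y` being a unit as well. -/
structure Stage where
  (x y u v γ τ Ω : L)
  hxy : IntermediateField.adjoin k {x, y} = ⊤
  huv : IntermediateField.adjoin k {u, v} = K
  ind : AlgebraicIndependent k ![x, y]
  ind' : AlgebraicIndependent k ![u, v]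
  hγ : ∃ c : k, c ≠ 0 ∧ ∃ e, Un (loc k x y) e ∧ ∃ f ∈ loc k x y,
    γ = algebraMap k L c + e * y + f * x
  hτ : Un (loc k x y) τ
  hΩ : Un (loc k x y) Ω
  hu : u = γ * x ^ 2
  hv : v = τ * y ^ 2 + x * Ω

variable {K}

namespace Stage

/-- `t` follows `s`: both surfaces have been blown up twice, at the points determined by the
constants `μ` and `c`. The coordinates change roles, so that `t.x, t.u` are the exceptional
parameters `s.y, s.v`. -/
def Next (s t : Stage K) : Prop :=
  ∃ μ c : k, μ ≠ 0 ∧ c ≠ 0 ∧ t.x = s.y ∧ s.x = s.y ^ 2 * (t.y + algebraMap k L μ) ∧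
    t.u = s.v ∧ s.u = s.v ^ 2 * (t.v + algebraMap k L c)

lemma y_ne (s : Stage K) : s.y ≠ 0 := by simpa using s.ind.ne_zero 1
lemma x_ne (s : Stage K) : s.x ≠ 0 := by simpa using s.ind.ne_zero 0
lemma u_ne (s : Stage K) : s.u ≠ 0 := by simpa using s.ind'.ne_zero 0
lemma v_ne (s : Stage K) : s.v ≠ 0 := by simpa using s.ind'.ne_zero 1

end Stage

lemma un_residue {a b z : L} (h : AlgebraicIndependent k ![a, b]) (hz : Un (loc k a b) z) :
    ∃ c : k, c ≠ 0 ∧ ∃ s ∈ loc k a b, ∃ t ∈ loc k a b, z = algebraMap k L c + s * a + t * b := by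
  obtain ⟨c, s, hs, t, ht, e⟩ := loc_decomp h hz.1
  refine ⟨c, ?_, s, hs, t, ht, e⟩
  rintro rfl
  rw [map_zero, zero_add] at e
  exact (loc_par h).not_un hs ht (e ▸ hz)

/-- The shape of a stage reproduces itself. On `x = y² (y₁ + μ)` one has `v = y² h` with `h` a unit,
and `u / v² = γ (y₁ + μ)² / h²` has a nonzero residue `c`. In characteristic two the squares in
`γ (y₁ + μ)² - c h²` expand additively, so no linear term in `y₁` appears and `v₁ = u / v² - c` is
`τ₁ y₁² + y Ω₁`; the unit `Ω₁` comes from the linear term of `γ` in `y`, and the linear term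
`Ω y₁` of `h` makes `h` the new `γ`. -/
lemma Stage.exists_next [Infinite k] [CharP k 2] [Algebra.IsAlgebraic K L] (s : Stage K) :
    ∃ t : Stage K, s.Next t := by
  obtain ⟨x, y, u, v, γ, τ, Ω, hxy, huv, ind, ind', hγ, hτ, hΩ, hu, hv⟩ := s
  obtain ⟨γ₀, hγ₀, e, he, f, hf, eγ⟩ := hγ
  obtain ⟨τ₀, hτ₀, a₁, ha₁, a₂, ha₂, eτ⟩ := un_residue ind hτ
  obtain ⟨Ω₀, hΩ₀, b₁, hb₁, b₂, hb₂, eΩ⟩ := un_residue ind hΩ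
  have h2k : (2 : k) = 0 := CharP.cast_eq_zero k 2
  have h2 : (2 : L) = 0 := by
    have := congrArg (algebraMap k L) h2k
    rwa [map_ofNat, map_zero] at this
  classical
  -- avoiding these two values makes the new point and the residue `h₀` of `v / y²` nonzero
  obtain ⟨μ, hμ⟩ := Infinite.exists_notMem_finset ({0, -τ₀ / Ω₀} : Finset k)
  simp only [Finset.mem_insert, Finset.mem_singleton, not_or] at hμ
  obtain ⟨hμ0, hμ1⟩ := hμ
  set h₀ : k := τ₀ + Ω₀ * μ with hh₀
  have hh₀0 : h₀ ≠ 0 := by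
    intro h0; apply hμ1; field_simp; linear_combination h0
  -- the residue of `u / v²` at the new point
  set c : k := γ₀ * μ ^ 2 / h₀ ^ 2 with hc
  have hc0 : c ≠ 0 := by rw [hc]; positivity
  have hcL : algebraMap k L c * algebraMap k L h₀ ^ 2 = algebraMap k L γ₀ * algebraMap k L μ ^ 2 := by
    rw [← map_pow, ← map_pow, ← map_mul, ← map_mul]; congr 1; rw [hc]; field_simp
  have hhL : algebraMap k L h₀ = algebraMap k L τ₀ + algebraMap k L Ω₀ * algebraMap k L μ := by
    simp [hh₀]
  have hy0 : y ≠ 0 := by simpa using ind.ne_zero 1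
  have hv0 : v ≠ 0 := by simpa using ind'.ne_zero 1
  obtain ⟨Y, hY⟩ : ∃ Y, Y = x / y ^ 2 - algebraMap k L μ := ⟨_, rfl⟩
  obtain ⟨V, hV⟩ : ∃ V, V = u / v ^ 2 - algebraMap k L c := ⟨_, rfl⟩
  have ex : x = y ^ 2 * (Y + algebraMap k L μ) := by rw [hY]; field_simp; ring
  have eu : u = v ^ 2 * (V + algebraMap k L c) := by rw [hV]; field_simp; ring
  have hxy' : IntermediateField.adjoin k {y, Y} = ⊤ := by rw [adjoin_step hy0 ex, hxy]
  have huv' : IntermediateField.adjoin k {v, V} = K := by rw [adjoin_step hv0 eu, huv]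
  have ind₁ : AlgebraicIndependent k ![y, Y] := algInd_of_isAlgebraic ind (by
    rw [hxy']; infer_instance)
  have ind₁' : AlgebraicIndependent k ![v, V] := algInd_of_isAlgebraic ind (by
    rw [huv']; infer_instance)
  have hp := loc_par ind₁
  have hA : loc k x y ≤ loc k y Y := by
    refine (loc_dom ind hp ?_ hp.nuX).1
    rw [ex, pow_two, mul_assoc, mul_comm]
    exact hp.nu_mul (Subalgebra.mul_mem _ hp.memX (Subalgebra.add_mem _ hp.memY (mem_C _ _))) hp.nuX
  set A := loc k y Y with hAdef
  have mC := mem_C (L := L) A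
  set μ' := algebraMap k L μ with hμ'
  set c' := algebraMap k L c with hc'
  set γ' := algebraMap k L γ₀
  set τ' := algebraMap k L τ₀
  set Ω' := algebraMap k L Ω₀
  -- the parts of `τ` and `Ω` beyond the residue, divided by `y`
  obtain ⟨T, hT, eT⟩ : ∃ T ∈ A, τ = τ' + T * y :=
    ⟨a₁ * (y * (Y + μ')) + a₂, add_mem (mul_mem (hA ha₁) (mul_mem hp.memX (add_mem hp.memY (mC _))))
      (hA ha₂), by rw [eτ, ex]; ring⟩
  obtain ⟨W, hW, eW⟩ : ∃ W ∈ A, Ω = Ω' + W * y :=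
    ⟨b₁ * (y * (Y + μ')) + b₂, add_mem (mul_mem (hA hb₁) (mul_mem hp.memX (add_mem hp.memY (mC _))))
      (hA hb₂), by rw [eΩ, ex]; ring⟩
  set h := τ + Ω * (Y + μ') with hh
  have eh : h = algebraMap k L h₀ + Ω' * Y + (T + W * (Y + μ')) * y := by
    rw [hh, hhL, eT, eW]; ring
  have hTW : T + W * (Y + μ') ∈ A := add_mem hT (mul_mem hW (add_mem hp.memY (mC _)))
  have hhu : Un A h := by
    rw [eh]
    exact hp.symm.un_add (Un.C A hh₀0) (mC _) hTW
  have evh : v = y ^ 2 * h := by rw [hv, hh]; nth_rw 1 [ex]; ring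
  have hh0 := hhu.2.1
  have hhi2 := (hhu.inv.pow 2)
  have ex' : x = (y * (Y + μ')) * y := by rw [ex]; ring
  set N := f * (Y + μ') * μ' ^ 2 - c' * T ^ 2 - c' * W ^ 2 * μ' ^ 2 with hN
  have hNA : N ∈ A := sub_mem (sub_mem (mul_mem (mul_mem (hA hf) (add_mem hp.memY (mC _)))
    (pow_mem (mC _) 2)) (mul_mem (mC _) (pow_mem hT 2)))
    (mul_mem (mul_mem (mC _) (pow_mem hW 2)) (pow_mem (mC _) 2))
  refine ⟨⟨y, Y, v, V, h, (γ - c' * Ω ^ 2) * h⁻¹ ^ 2, (μ' ^ 2 * e + N * y) * h⁻¹ ^ 2, hxy', huv',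
    ind₁, ind₁', ⟨h₀, hh₀0, Ω', Un.C A hΩ₀, _, hTW, eh⟩, ?_, ?_, by rw [evh]; ring, ?_⟩,
    μ, c, hμ0, hc0, rfl, ex, rfl, eu⟩
  · refine Un.mul ?_ hhi2
    have : γ - c' * Ω ^ 2 = algebraMap k L (γ₀ * τ₀ ^ 2 / h₀ ^ 2) +
        (e + f * (y * (Y + μ')) - c' * (2 * Ω' * W + W ^ 2 * y)) * y + 0 * Y := by
      have e1 : algebraMap k L (γ₀ * τ₀ ^ 2 / h₀ ^ 2) = γ' - c' * Ω' ^ 2 := by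
        rw [hc', ← map_pow, ← map_mul, ← map_sub]; congr 1
        rw [hc]; field_simp; rw [hh₀]; linear_combination (- τ₀ * Ω₀ * μ - Ω₀ ^ 2 * μ ^ 2 * 0) * h2k
      rw [e1, eγ, eW, ex]; ring
    rw [this]
    refine hp.un_add (Un.C A (by positivity)) ?_ A.zero_mem
    exact sub_mem (add_mem (hA he.1) (mul_mem (hA hf) (mul_mem hp.memX (add_mem hp.memY (mC _)))))
      (mul_mem (mC _) (add_mem (mul_mem (mul_mem (ofNat_mem A 2) (mC _)) hW)
        (mul_mem (pow_mem hW 2) hp.memX)))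
  · refine Un.mul ?_ hhi2
    have := hp.un_add (((Un.C A hμ0).pow 2).mul (he.mono hA)) hNA A.zero_mem
    rwa [zero_mul, add_zero] at this
  · have key : γ * (Y + μ') ^ 2 - c' * h ^ 2 =
        (γ - c' * Ω ^ 2) * Y ^ 2 + y * (μ' ^ 2 * e + N * y) := by
      have e2 : 2 * (Y * μ' * γ - c' * τ * Ω * (Y + μ') - c' * Ω ^ 2 * Y * μ' - c' * τ' * T * y
          - c' * Ω' * W * y * μ' ^ 2 + c' * τ' * Ω' * μ') = 0 := by rw [h2, zero_mul]
      rw [hhL] at hcL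
      have e3 : γ * μ' ^ 2 = γ' * μ' ^ 2 + e * y * μ' ^ 2 + f * (y ^ 2 * (Y + μ')) * μ' ^ 2 := by
        rw [eγ, ← ex]; ring
      have e4 : τ ^ 2 = τ' ^ 2 + 2 * τ' * T * y + T ^ 2 * y ^ 2 := by rw [eT]; ring
      have e5 : Ω ^ 2 = Ω' ^ 2 + 2 * Ω' * W * y + W ^ 2 * y ^ 2 := by rw [eW]; ring
      rw [hh, hN]
      linear_combination e2 + e3 - c' * e4 - c' * μ' ^ 2 * e5 - hcL
    have : V * h ^ 2 = γ * (Y + μ') ^ 2 - c' * h ^ 2 := by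
      rw [hV, hu, evh]
      nth_rw 1 [ex]
      field_simp
    rw [key] at this
    rw [inv_pow]
    field_simp
    linear_combination this

end Stages
end MonomCex

/-! ### The two sequences of quadratic transforms and the valuation -/

namespace MonomCex
open LocalMonomial MvPolynomial

section Seq
variable {k L : Type*} [Field k] [Field L] [Algebra k L] {K : IntermediateField k L}

namespace Stage

/-- The upper local ring of a stage. -/
def S (s : Stage K) : Subalgebra k L := loc k s.x s.y
/-- The local ring between the upper rings of `s` and of its successor: the first of the two
quadratic transforms. -/
def S' (s : Stage K) : Subalgebra k L := loc k (s.x / s.y) s.y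
/-- The lower local ring of a stage. -/
def R (s : Stage K) : Subalgebra k L := loc k s.u s.v
/-- The local ring between the lower rings of `s` and of its successor. -/
def R' (s : Stage K) : Subalgebra k L := loc k (s.u / s.v) s.v

variable (s : Stage K)

lemma indS' : AlgebraicIndependent k ![s.x / s.y, s.y] :=
  algInd_div s.ind (by rw [s.hxy]; infer_instance)
lemma indR' [Algebra.IsAlgebraic K L] : AlgebraicIndependent k ![s.u / s.v, s.v] :=
  algInd_div s.ind' (by rw [s.huv]; infer_instance)

lemma parS : Par s.S s.x s.y := loc_par s.ind
lemma parS' : Par s.S' (s.x / s.y) s.y := loc_par s.indS'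
lemma parR : Par s.R s.u s.v := loc_par s.ind'
lemma parR' [Algebra.IsAlgebraic K L] : Par s.R' (s.u / s.v) s.v := loc_par s.indR'

lemma dom_div {a b : L} (hb : b ≠ 0) (h : AlgebraicIndependent k ![a, b])
    (h' : AlgebraicIndependent k ![a / b, b]) :
    DominatesSet (loc k (a / b) b : Set L) (loc k a b) := by
  refine loc_dom h (loc_par h') ?_ (loc_par h').nuY
  have := (loc_par h').nu_mul (loc_memX (a / b) b) (loc_par h').nuY
  rwa [div_mul_cancel₀ _ hb] at this

lemma domSS' : DominatesSet (s.S' : Set L) s.S := dom_div s.y_ne s.ind s.indS'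
lemma domRR' [Algebra.IsAlgebraic K L] : DominatesSet (s.R' : Set L) s.R :=
  dom_div s.v_ne s.ind' s.indR'

lemma γ_un : Un s.S s.γ := by
  obtain ⟨c, hc, e, he, f, hf, h⟩ := s.hγ
  rw [h, add_assoc, add_comm (e * _), ← add_assoc]
  exact s.parS.un_add (Un.C _ hc) hf he.1

lemma domRS : DominatesSet (s.S : Set L) s.R := by
  refine loc_dom s.ind' s.parS ?_ ?_
  · rw [s.hu, pow_two, ← mul_assoc]
    exact s.parS.nu_mul (mul_mem s.γ_un.1 s.parS.memX) s.parS.nuX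
  · rw [s.hv, pow_two, ← mul_assoc, mul_comm s.x]
    exact s.parS.nu_add (s.parS.nu_mul (mul_mem s.hτ.1 s.parS.memY) s.parS.nuY)
      (s.parS.nu_mul s.hΩ.1 s.parS.nuX)

variable {s} {t : Stage K}

lemma Next.domS' (h : s.Next t) : DominatesSet (t.S : Set L) s.S' := by
  obtain ⟨μ, c, -, -, hx, ex, -, -⟩ := h
  refine loc_dom s.indS' t.parS ?_ (hx ▸ t.parS.nuX)
  rw [(by rw [ex, ← hx]; have := t.x_ne; field_simp :
    s.x / s.y = (t.y + algebraMap k L μ) * t.x)]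
  exact t.parS.nu_mul (add_mem t.parS.memY (mem_C _ _)) t.parS.nuX

lemma Next.domR' [Algebra.IsAlgebraic K L] (h : s.Next t) : DominatesSet (t.R : Set L) s.R' := by
  obtain ⟨μ, c, -, -, -, -, hx, ex⟩ := h
  refine loc_dom s.indR' t.parR ?_ (hx ▸ t.parR.nuX)
  rw [(by rw [ex, ← hx]; have := t.u_ne; field_simp :
    s.u / s.v = (t.v + algebraMap k L c) * t.u)]
  exact t.parR.nu_mul (add_mem t.parR.memY (mem_C _ _)) t.parR.nuX

lemma Next.domS (h : s.Next t) : DominatesSet (t.S : Set L) s.S := dom_trans h.domS' s.domSS'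
lemma Next.domR [Algebra.IsAlgebraic K L] (h : s.Next t) : DominatesSet (t.R : Set L) s.R :=
  dom_trans h.domR' s.domRR'

end Stage

/-- Every stage is the beginning of an infinite sequence of stages. -/
lemma exists_seq [Infinite k] [CharP k 2] [Algebra.IsAlgebraic K L] (s : Stage K) :
    ∃ st : ℕ → Stage K, st 0 = s ∧ ∀ n, (st n).Next (st (n + 1)) := by
  choose nx hnx using fun s : Stage K => s.exists_next
  exact ⟨fun n => nx^[n] s, rfl, fun n => by
    simp only [Function.iterate_succ_apply']; exact hnx _⟩

variable {st : ℕ → Stage K}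

lemma domS_le (hst : ∀ n, (st n).Next (st (n + 1))) {m n : ℕ} (h : m ≤ n) :
    DominatesSet ((st n).S : Set L) (st m).S := by
  induction n, h using Nat.le_induction with
  | base => exact ⟨le_rfl, fun _ _ _ h => h⟩
  | succ n _ ih => exact dom_trans (hst n).domS ih

lemma domR_le [Algebra.IsAlgebraic K L] (hst : ∀ n, (st n).Next (st (n + 1))) {m n : ℕ}
    (h : m ≤ n) : DominatesSet ((st n).R : Set L) (st m).R := by
  induction n, h using Nat.le_induction with
  | base => exact ⟨le_rfl, fun _ _ _ h => h⟩
  | succ n _ ih => exact dom_trans (hst n).domR ih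

lemma nu_of_dom {A B : Subalgebra k L} (h : DominatesSet (B : Set L) (A : Set L)) {z : L}
    (hz : NU A z) : NU B z :=
  ⟨h.1 hz.1, fun hu => hz.2 ⟨hz.1, hu.2.1, h.2 z hz.1 hu.2.1 hu.2.2⟩⟩

/-- A valuation ring dominating the union of the upper rings dominates each of them. -/
lemma exists_valuation (hst : ∀ n, (st n).Next (st (n + 1))) :
    ∃ ω : ValuationSubring L, ∀ n, DominatesSet (ω : Set L) ((st n).S : Set L) := by
  have mono : ∀ {m n : ℕ}, m ≤ n → ∀ z, z ∈ (st m).S → z ∈ (st n).S :=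
    fun h z hz => (domS_le hst h).1 hz
  have dich : ∀ {n z}, z ∈ (st n).S → z ≠ 0 → z⁻¹ ∉ (st n).S → NU (st n).S z :=
    fun hz _ hi => ⟨hz, fun hu => hi hu.2.2⟩
  let U : Subring L :=
    { carrier := {z | ∃ n, z ∈ (st n).S}
      mul_mem' := by
        rintro a b ⟨m, hm⟩ ⟨n, hn⟩
        exact ⟨max m n, mul_mem (mono (le_max_left _ _) _ hm) (mono (le_max_right _ _) _ hn)⟩
      add_mem' := by
        rintro a b ⟨m, hm⟩ ⟨n, hn⟩
        exact ⟨max m n, add_mem (mono (le_max_left _ _) _ hm) (mono (le_max_right _ _) _ hn)⟩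
      one_mem' := ⟨0, one_mem _⟩
      zero_mem' := ⟨0, zero_mem _⟩
      neg_mem' := by
        rintro a ⟨m, hm⟩
        exact ⟨m, neg_mem hm⟩ }
  let I : Ideal U :=
    { carrier := {z | ∃ n, NU (st n).S (z : L)}
      zero_mem' := ⟨0, nu_zero _⟩
      add_mem' := by
        rintro a b ⟨m, hm⟩ ⟨n, hn⟩
        exact ⟨max m n, (st _).parS.nu_add (nu_of_dom (domS_le hst (le_max_left _ _)) hm)
          (nu_of_dom (domS_le hst (le_max_right _ _)) hn)⟩
      smul_mem' := by
        rintro ⟨a, m, hm⟩ b ⟨n, hn⟩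
        exact ⟨max m n, (st _).parS.nu_mul (mono (le_max_left _ _) _ hm)
          (nu_of_dom (domS_le hst (le_max_right _ _)) hn)⟩ }
  have hI : I ≠ ⊤ := by
    rw [Ne, Ideal.eq_top_iff_one]
    rintro ⟨n, hn⟩
    exact hn.2 (Un.one _)
  obtain ⟨ω, hU, hIω⟩ := Ideal.image_subset_nonunits_valuationSubring I hI
  refine ⟨ω, fun n => ⟨fun z hz => hU ⟨n, hz⟩, fun z hz h0 hi => ?_⟩⟩
  by_contra hni
  have hz' : z ∈ ω.nonunits := hIω ⟨⟨z, n, hz⟩, ⟨n, dich hz h0 hni⟩, rfl⟩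
  rw [ValuationSubring.mem_nonunits_iff] at hz'
  have h1 : ω.valuation z⁻¹ ≤ 1 := (ω.valuation_le_one_iff _).2 hi
  have : ω.valuation z * ω.valuation z⁻¹ = 1 := by
    rw [← map_mul, mul_inv_cancel₀ h0, map_one]
  have h2 : ω.valuation z * ω.valuation z⁻¹ < 1 := mul_lt_one_of_lt_of_le hz' h1
  exact absurd this h2.ne

/-- The rings of the upper sequence of quadratic transforms. -/
def chainS (st : ℕ → Stage K) (n : ℕ) : Subalgebra k L :=
  if n % 2 = 0 then (st (n / 2)).S else (st (n / 2)).S'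

lemma chainS_even (n : ℕ) : chainS st (2 * n) = (st n).S := by simp [chainS]
lemma chainS_odd (n : ℕ) : chainS st (2 * n + 1) = (st n).S' := by
  have : (2 * n + 1) / 2 = n := by omega
  simp [chainS, this]

/-- The rings of the lower sequence of quadratic transforms. -/
def chainR (st : ℕ → Stage K) (n : ℕ) : Subalgebra k L :=
  if n % 2 = 0 then (st (n / 2)).R else (st (n / 2)).R'

lemma chainR_even (n : ℕ) : chainR st (2 * n) = (st n).R := by simp [chainR]
lemma chainR_odd (n : ℕ) : chainR st (2 * n + 1) = (st n).R' := by
  have : (2 * n + 1) / 2 = n := by omega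
  simp [chainR, this]

/-- The local rings dominated by `ω` which arise from `S` by monoidal transforms are members of the
upper sequence. -/
lemma mem_chainS (hst : ∀ n, (st n).Next (st (n + 1))) {ω : Set L}
    (hω : ∀ n, DominatesSet ω ((st n).S : Set L)) {A : Subalgebra k L}
    (h : Relation.ReflTransGen (IsMonoidalTransform (k := k) (F := L)) (st 0).S A)
    (hA : DominatesSet ω (A : Set L)) : ∃ n, A = (st n).S ∨ A = (st n).S' := by
  have hω' : ∀ n, DominatesSet ω ((st n).S' : Set L) := fun n => dom_trans (hω _) (hst n).domS'
  rw [← chainS_even 0, Nat.mul_zero] at h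
  suffices key : ∀ n A', IsMonoidalTransform (chainS st n) A' → DominatesSet ω (A' : Set L) →
      A' = chainS st n ∨ A' = chainS st (n + 1) by
    obtain ⟨n, rfl⟩ := mt_chain key h hA
    rcases Nat.even_or_odd' n with ⟨m, rfl | rfl⟩
    · exact ⟨m, Or.inl (chainS_even m)⟩
    · exact ⟨m, Or.inr (chainS_odd m)⟩
  intro n A' hA' hd
  rcases Nat.even_or_odd' n with ⟨m, rfl | rfl⟩
  · rw [chainS_even] at *
    rw [chainS_odd]
    exact mt_step (c := 0) (st m).ind (st m).indS'
      (by simp; rw [mul_div_cancel₀ _ (st m).y_ne]) (hω' m) hA' hd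
  · rw [show 2 * m + 1 + 1 = 2 * (m + 1) by ring, chainS_even]
    rw [chainS_odd] at *
    obtain ⟨μ, c, -, -, hx, ex, -, -⟩ := hst m
    have hSe : (st (m + 1)).S = loc k (st (m + 1)).y (st m).y := by
      rw [Stage.S, loc_symm, hx]
    rw [hSe]
    refine mt_step (c := μ) (st m).indS' ?_ ?_ (hSe ▸ hω (m + 1)) hA' hd
    · rw [← hx]; exact algInd_symm (st (m + 1)).ind
    · rw [ex]; have := (st m).y_ne; field_simp

lemma mem_chainR [Algebra.IsAlgebraic K L] (hst : ∀ n, (st n).Next (st (n + 1))) {ω : Set L}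
    (hω : ∀ n, DominatesSet ω ((st n).S : Set L)) {A : Subalgebra k L}
    (h : Relation.ReflTransGen (IsMonoidalTransform (k := k) (F := L)) (st 0).R A)
    (hA : DominatesSet ω (A : Set L)) : ∃ n, A = (st n).R ∨ A = (st n).R' := by
  replace hω : ∀ n, DominatesSet ω ((st n).R : Set L) := fun n => dom_trans (hω n) (st n).domRS
  have hω' : ∀ n, DominatesSet ω ((st n).R' : Set L) := fun n => dom_trans (hω _) (hst n).domR'
  rw [← chainR_even 0, Nat.mul_zero] at h
  suffices key : ∀ n A', IsMonoidalTransform (chainR st n) A' → DominatesSet ω (A' : Set L) →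
      A' = chainR st n ∨ A' = chainR st (n + 1) by
    obtain ⟨n, rfl⟩ := mt_chain key h hA
    rcases Nat.even_or_odd' n with ⟨m, rfl | rfl⟩
    · exact ⟨m, Or.inl (chainR_even m)⟩
    · exact ⟨m, Or.inr (chainR_odd m)⟩
  intro n A' hA' hd
  rcases Nat.even_or_odd' n with ⟨m, rfl | rfl⟩
  · rw [chainR_even] at *
    rw [chainR_odd]
    exact mt_step (c := 0) (st m).ind' (st m).indR'
      (by simp; rw [mul_div_cancel₀ _ (st m).v_ne]) (hω' m) hA' hd
  · rw [show 2 * m + 1 + 1 = 2 * (m + 1) by ring, chainR_even]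
    rw [chainR_odd] at *
    obtain ⟨μ, c, -, -, -, -, hx, ex⟩ := hst m
    have hSe : (st (m + 1)).R = loc k (st (m + 1)).v (st m).v := by
      rw [Stage.R, loc_symm, hx]
    rw [hSe]
    refine mt_step (c := c) (st m).indR' ?_ ?_ (hSe ▸ hω (m + 1)) hA' hd
    · rw [← hx]; exact algInd_symm (st (m + 1)).ind'
    · rw [ex]; have := (st m).v_ne; field_simp

end Seq
end MonomCex

/-! ### Monomials in two primes -/

namespace MonomCex
open LocalMonomial MvPolynomial

section Mono
variable {k L : Type*} [Field k] [Field L] [Algebra k L] {A : Subalgebra k L}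

/-- `r` divides `z` in the subring `A` of `L`. -/
def Dv (A : Subalgebra k L) (r z : L) : Prop := ∃ w ∈ A, z = r * w

lemma Dv.mul_right {r z w : L} (h : Dv A r z) (hw : w ∈ A) : Dv A r (z * w) := by
  obtain ⟨v, hv, rfl⟩ := h
  exact ⟨v * w, mul_mem hv hw, by ring⟩
lemma Dv.mul_left {r z w : L} (h : Dv A r z) (hw : w ∈ A) : Dv A r (w * z) := by
  rw [mul_comm]; exact h.mul_right hw
lemma Dv.self (r : L) : Dv A r r := ⟨1, one_mem _, by simp⟩
lemma Dv.trans {r s t : L} (h : Dv A r s) (h' : Dv A s t) : Dv A r t := by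
  obtain ⟨w, hw, rfl⟩ := h'
  exact h.mul_right hw
lemma Dv.add {r z w : L} (h : Dv A r z) (h' : Dv A r w) : Dv A r (z + w) := by
  obtain ⟨a, ha, rfl⟩ := h
  obtain ⟨b, hb, rfl⟩ := h'
  exact ⟨a + b, add_mem ha hb, by ring⟩
lemma Dv.sub {r z w : L} (h : Dv A r z) (h' : Dv A r w) : Dv A r (z - w) := by
  obtain ⟨a, ha, rfl⟩ := h
  obtain ⟨b, hb, rfl⟩ := h'
  exact ⟨a - b, sub_mem ha hb, by ring⟩
lemma Dv.pow {r z : L} (h : Dv A r z) (hz : z ∈ A) {n : ℕ} (hn : n ≠ 0) : Dv A r (z ^ n) := by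
  obtain ⟨n, rfl⟩ := Nat.exists_eq_succ_of_ne_zero hn
  rw [pow_succ]; exact h.mul_left (pow_mem hz n)

namespace PrimeIn
variable {p q r : L}

lemma dv_iff (hr : PrimeIn A r) {z : L} : Dv A r z ↔ z / r ∈ A :=
  ⟨fun ⟨w, hw, e⟩ => by rw [e, mul_div_cancel_left₀ _ hr.ne_zero]; exact hw,
    fun h => ⟨_, h, (mul_div_cancel₀ _ hr.ne_zero).symm⟩⟩

lemma dv_mul (hr : PrimeIn A r) {f g : L} (hf : f ∈ A) (hg : g ∈ A) (h : Dv A r (f * g)) :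
    Dv A r f ∨ Dv A r g := by
  rw [hr.dv_iff] at *
  rw [hr.dv_iff]
  exact hr.dvd_or_dvd f hf g hg h

lemma not_dv_un (hr : PrimeIn A r) {δ : L} (hδ : Un A δ) : ¬ Dv A r δ := by
  rintro ⟨w, hw, e⟩
  apply hr.inv_not_mem
  have hr0 := hr.ne_zero
  have hδ0 := hδ.2.1
  rw [(by rw [e]; have : w ≠ 0 := fun h => hδ0 (by rw [e, h, mul_zero])
          field_simp : r⁻¹ = w * δ⁻¹)]
  exact mul_mem hw hδ.2.2

lemma dv_pow (hr : PrimeIn A r) {f : L} (hf : f ∈ A) {n : ℕ} (h : Dv A r (f ^ n)) : Dv A r f := by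
  induction n with
  | zero => exact absurd (by simpa using h) (hr.not_dv_un (Un.one A))
  | succ n ih =>
    rw [pow_succ] at h
    exact (hr.dv_mul (pow_mem hf n) hf h).elim ih id

lemma dv_mono (hr : PrimeIn A r) (hp : p ∈ A) (hq : q ∈ A) {δ : L} (hδ : Un A δ) {a b : ℕ}
    (h : Dv A r (δ * p ^ a * q ^ b)) : Dv A r p ∨ Dv A r q := by
  rcases hr.dv_mul (mul_mem hδ.1 (pow_mem hp a)) (pow_mem hq b) h with h | h
  · rcases hr.dv_mul hδ.1 (pow_mem hp a) h with h | h
    · exact absurd h (hr.not_dv_un hδ)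
    · exact Or.inl (hr.dv_pow hp h)
  · exact Or.inr (hr.dv_pow hq h)

lemma assoc (hr : PrimeIn A r) (hp : PrimeIn A p) (h : Dv A r p) : Dv A p r := by
  obtain ⟨s, hs, e⟩ := h
  rcases hp.dv_mul hr.mem hs (e ▸ Dv.self p) with h | ⟨s', hs', e'⟩
  · exact h
  · exfalso
    apply hr.inv_not_mem
    have : r * s' = 1 := by
      have : p * (r * s') = p * 1 := by
        nth_rw 2 [e]; rw [e']; ring
      exact mul_left_cancel₀ hp.ne_zero this
    rw [inv_eq_of_mul_eq_one_right this]; exact hs'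

/-- Two primes dividing the same prime are associated. -/
lemma dv_of_dv_dv (hr : PrimeIn A r) (hp : PrimeIn A p) (h : Dv A r p) (h' : Dv A q p)
    (hq : PrimeIn A q) : Dv A r q := h.trans (hq.assoc hp h')

end PrimeIn

/-- Two primes of `A` neither of which divides the other. -/
structure Indep (A : Subalgebra k L) (p q : L) : Prop where
  p1 : PrimeIn A p
  p2 : PrimeIn A q
  nd : ¬ Dv A p q

namespace Indep
variable {p q r : L}
lemma symm (h : Indep A p q) : Indep A q p := ⟨h.p2, h.p1, fun hd => h.nd (h.p2.assoc h.p1 hd)⟩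

lemma not_dv_mono (h : Indep A p q) {δ : L} (hδ : Un A δ) {b : ℕ} : ¬ Dv A p (δ * q ^ b) := by
  intro hd
  rcases h.p1.dv_mul hδ.1 (pow_mem h.p2.mem b) hd with h1 | h1
  · exact h.p1.not_dv_un hδ h1
  · exact h.nd (h.p1.dv_pow h.p2.mem h1)

lemma unique_aux (h : Indep A p q) {δ δ' : L} (hδ : Un A δ) (hδ' : Un A δ') {a b c d : ℕ}
    (e : δ * p ^ a * q ^ b = δ' * p ^ c * q ^ d) : c ≤ a := by
  by_contra! hlt
  obtain ⟨i, rfl⟩ := Nat.exists_eq_add_of_lt hlt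
  apply h.not_dv_mono hδ (b := b)
  refine ⟨δ' * p ^ i * q ^ d,
    mul_mem (mul_mem hδ'.1 (pow_mem h.p1.mem i)) (pow_mem h.p2.mem d), ?_⟩
  have hp := pow_ne_zero a h.p1.ne_zero
  refine mul_left_cancel₀ hp ?_
  calc p ^ a * (δ * q ^ b) = δ * p ^ a * q ^ b := by ring
    _ = _ := by rw [e]; ring

lemma unique (h : Indep A p q) {δ δ' : L} (hδ : Un A δ) (hδ' : Un A δ') {a b c d : ℕ}
    (e : δ * p ^ a * q ^ b = δ' * p ^ c * q ^ d) : a = c ∧ b = d := by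
  have he : δ * q ^ b * p ^ a = δ' * q ^ d * p ^ c := by linear_combination e
  exact ⟨le_antisymm (h.unique_aux hδ' hδ e.symm) (h.unique_aux hδ hδ' e),
    le_antisymm (h.symm.unique_aux hδ' hδ he.symm) (h.symm.unique_aux hδ hδ' he)⟩

/-- A Laurent monomial in two independent primes that lies in the ring has nonnegative exponents. -/
lemma exp_nonneg (h : Indep A p q) {δ U : L} (hδ : Un A δ) (hU : U ∈ A) {a b : ℤ}
    (e : U = δ * p ^ a * q ^ b) : 0 ≤ a := by
  by_contra! hlt
  obtain ⟨i, hi⟩ := Int.eq_ofNat_of_zero_le (a := -a - 1) (by omega)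
  obtain rfl : a = -((i + 1 : ℕ) : ℤ) := by push_cast; omega
  have hp := h.p1.ne_zero
  have hq := h.p2.ne_zero
  rcases b.eq_nat_or_neg with ⟨j, rfl | rfl⟩
  · apply h.not_dv_mono hδ (b := j)
    refine ⟨U * p ^ i, mul_mem hU (pow_mem h.p1.mem i), ?_⟩
    rw [e, zpow_neg, zpow_natCast, zpow_natCast]
    field_simp
    ring
  · apply h.p1.not_dv_un hδ
    refine ⟨U * p ^ i * q ^ j, mul_mem (mul_mem hU (pow_mem h.p1.mem i)) (pow_mem h.p2.mem j), ?_⟩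
    rw [e, zpow_neg, zpow_neg, zpow_natCast, zpow_natCast]
    field_simp
    ring

end Indep

/-- `U, V` are monomials in two independent primes of `A`, with exponent matrix of rank two.
Exponents are natural numbers; integer exponents reduce to these by `Mono.of_int`. -/
def Mono (A : Subalgebra k L) (U V : L) : Prop :=
  ∃ p q δ δ' : L, ∃ a b c d : ℕ, Indep A p q ∧ Un A δ ∧ Un A δ' ∧
    U = δ * p ^ a * q ^ b ∧ V = δ' * p ^ c * q ^ d ∧ (a : ℤ) * d ≠ b * c

lemma Mono.symm {U V : L} (h : Mono A U V) : Mono A V U := by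
  obtain ⟨p, q, δ, δ', a, b, c, d, h, hδ, hδ', eU, eV, hn⟩ := h
  exact ⟨p, q, δ', δ, c, d, a, b, h, hδ', hδ, eV, eU, fun e => hn (by rw [mul_comm (b : ℤ), ← e.symm]; ring)⟩

lemma Mono.of_int {p q U V δ δ' : L} (h : Indep A p q) (hδ : Un A δ) (hδ' : Un A δ') (hU : U ∈ A)
    (hV : V ∈ A) {a b c d : ℤ} (eU : U = δ * p ^ a * q ^ b) (eV : V = δ' * p ^ c * q ^ d)
    (hn : a * d ≠ b * c) : Mono A U V := by
  obtain ⟨a, rfl⟩ := Int.eq_ofNat_of_zero_le (h.exp_nonneg hδ hU eU)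
  obtain ⟨c, rfl⟩ := Int.eq_ofNat_of_zero_le (h.exp_nonneg hδ' hV eV)
  obtain ⟨b, rfl⟩ := Int.eq_ofNat_of_zero_le (h.symm.exp_nonneg hδ hU
    (by rw [eU]; ring : U = δ * q ^ b * p ^ (a : ℤ)))
  obtain ⟨d, rfl⟩ := Int.eq_ofNat_of_zero_le (h.symm.exp_nonneg hδ' hV
    (by rw [eV]; ring : V = δ' * q ^ d * p ^ (c : ℤ)))
  exact ⟨p, q, δ, δ', a, b, c, d, h, hδ, hδ', by simpa using eU, by simpa using eV, hn⟩

/-- A monomial in two elements is not divisible by three independent primes. -/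
lemma three_primes {p q r₁ r₂ r₃ δ : L} {a b : ℕ} (hp : PrimeIn A p) (hq : PrimeIn A q)
    (hδ : Un A δ) (h12 : Indep A r₁ r₂) (h13 : Indep A r₁ r₃) (h23 : Indep A r₂ r₃)
    (h1 : Dv A r₁ (δ * p ^ a * q ^ b)) (h2 : Dv A r₂ (δ * p ^ a * q ^ b))
    (h3 : Dv A r₃ (δ * p ^ a * q ^ b)) : False := by
  have := h12.p1.dv_mono hp.mem hq.mem hδ h1
  have := h12.p2.dv_mono hp.mem hq.mem hδ h2
  have := h13.p2.dv_mono hp.mem hq.mem hδ h3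
  have key : ∀ {r s t}, PrimeIn A t → Indep A r s → Dv A r t → Dv A s t → False :=
    fun ht hi h h' => hi.nd (hi.p1.dv_of_dv_dv ht h h' hi.p2)
  rcases ‹Dv A r₁ p ∨ Dv A r₁ q› with h1 | h1 <;> rcases ‹Dv A r₂ p ∨ Dv A r₂ q› with h2 | h2 <;>
    rcases ‹Dv A r₃ p ∨ Dv A r₃ q› with h3 | h3
  · exact key hp h12 h1 h2
  · exact key hp h12 h1 h2
  · exact key hp h13 h1 h3
  · exact key hq h23 h2 h3
  · exact key hp h23 h2 h3
  · exact key hq h13 h1 h3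
  · exact key hq h12 h1 h2
  · exact key hq h12 h1 h2

lemma Mono.not_three {U V r₁ r₂ r₃ : L} (h : Mono A U V) (h12 : Indep A r₁ r₂)
    (h13 : Indep A r₁ r₃) (h23 : Indep A r₂ r₃)
    (h1 : Dv A r₁ U) (h2 : Dv A r₂ U) (h3 : Dv A r₃ U) : False := by
  obtain ⟨p, q, δ, δ', a, b, c, d, h, hδ, hδ', rfl, eV, hn⟩ := h
  exact three_primes h.p1 h.p2 hδ h12 h13 h23 h1 h2 h3

/-- Monomials with independent exponent vectors are multiplicatively independent up to units. -/
lemma Mono.not_rel {U V ε : L} (h : Mono A U V) (hε : Un A ε) {E F : ℕ} (hE : E ≠ 0)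
    (e : U ^ E = ε * V ^ F) : False := by
  obtain ⟨p, q, δ, δ', a, b, c, d, h, hδ, hδ', rfl, rfl, hn⟩ := h
  have e' : δ ^ E * p ^ (a * E) * q ^ (b * E) = (ε * δ' ^ F) * p ^ (c * F) * q ^ (d * F) := by
    rw [pow_mul, pow_mul, pow_mul, pow_mul]
    linear_combination e
  obtain ⟨h1, h2⟩ := h.unique (hδ.pow E) (hε.mul (hδ'.pow F)) e'
  apply hn
  have hE' : (E : ℤ) ≠ 0 := by exact_mod_cast hE
  have hac : (a : ℤ) * E = c * F := by exact_mod_cast h1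
  have hbd : (b : ℤ) * E = d * F := by exact_mod_cast h2
  refine mul_right_cancel₀ hE' ?_
  linear_combination d * hac - c * hbd

/-- Two monomials `y ψ₁`, `y ψ₂` with `ψ₁`, `ψ₂` primes independent of `y` cannot have independent
exponents. -/
lemma Mono.not_yy {y ψ₁ ψ₂ : L} (h : Mono A (y * ψ₁) (y * ψ₂)) (h1 : Indep A y ψ₁)
    (h2 : Indep A y ψ₂) : False := by
  have hd : Dv A ψ₁ ψ₂ := by
    by_contra hnd
    obtain ⟨p, q, δ, δ', a, b, c, d, h, hδ, hδ', eU, eV, hn⟩ := h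
    have a1 := h1.p1.dv_mono h.p1.mem h.p2.mem hδ (by rw [← eU]; exact ⟨ψ₁, h1.p2.mem, rfl⟩)
    have a2 := h1.p2.dv_mono h.p1.mem h.p2.mem hδ (by rw [← eU]; exact ⟨y, h1.p1.mem, mul_comm _ _⟩)
    have a3 := h2.p2.dv_mono h.p1.mem h.p2.mem hδ' (by rw [← eV]; exact ⟨y, h1.p1.mem, mul_comm _ _⟩)
    have key : ∀ {r s t}, PrimeIn A t → Indep A r s → Dv A r t → Dv A s t → False :=
      fun ht hi h h' => hi.nd (hi.p1.dv_of_dv_dv ht h h' hi.p2)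
    have h3 : Indep A ψ₁ ψ₂ := ⟨h1.p2, h2.p2, hnd⟩
    rcases a1 with a1 | a1 <;> rcases a2 with a2 | a2 <;> rcases a3 with a3 | a3
    · exact key h.p1 h1 a1 a2
    · exact key h.p1 h1 a1 a2
    · exact key h.p1 h2 a1 a3
    · exact key h.p2 h3 a2 a3
    · exact key h.p1 h3 a2 a3
    · exact key h.p2 h2 a1 a3
    · exact key h.p2 h1 a1 a2
    · exact key h.p2 h1 a1 a2
  obtain ⟨w, hw, e⟩ := h1.p2.assoc h2.p2 hd
  obtain ⟨w', hw', e'⟩ := hd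
  have hww : w * w' = 1 := by
    refine mul_left_cancel₀ h1.p2.ne_zero ?_
    rw [mul_one]; nth_rw 2 [e]; rw [e']; ring
  refine h.not_rel (E := 1) (F := 1) (ε := w) ⟨hw, left_ne_zero_of_mul_eq_one hww, ?_⟩ one_ne_zero ?_
  · rw [inv_eq_of_mul_eq_one_right hww]; exact hw'
  · rw [pow_one, pow_one]; nth_rw 1 [e]; ring

/-- If `y ψ` and `V` are independent monomials and the prime `ψ` does not divide `V`, then `V` is
a power of `y` up to a unit. -/
lemma Mono.pow_of_not_dv {y ψ V : L} (h : Mono A (y * ψ) V) (h1 : Indep A y ψ)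
    (h2 : ¬ Dv A ψ V) : ∃ ε i, Un A ε ∧ V = ε * y ^ (i : ℕ) := by
  obtain ⟨p, q, δ, δ', a, b, c, d, h, hδ, hδ', eU, eV, -⟩ := h
  have a1 := h1.p1.dv_mono h.p1.mem h.p2.mem hδ (by rw [← eU]; exact ⟨ψ, h1.p2.mem, rfl⟩)
  have a2 := h1.p2.dv_mono h.p1.mem h.p2.mem hδ (by rw [← eU]; exact ⟨y, h1.p1.mem, mul_comm _ _⟩)
  have key : ∀ {r s t}, PrimeIn A t → Indep A r s → Dv A r t → Dv A s t → False :=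
    fun ht hi h h' => hi.nd (hi.p1.dv_of_dv_dv ht h h' hi.p2)
  have fin : ∀ {p q : L} {c d : ℕ}, Indep A p q → V = δ' * p ^ c * q ^ d → Dv A y p → Dv A ψ q →
      ∃ ε i, Un A ε ∧ V = ε * y ^ (i : ℕ) := by
    intro p q c d h eV hy hψ
    obtain ⟨w, hw, e⟩ := h1.p1.assoc h.p1 hy
    obtain ⟨w', hw', e'⟩ := hy
    have hww : w * w' = 1 := by
      refine mul_left_cancel₀ h1.p1.ne_zero ?_
      rw [mul_one]; nth_rw 2 [e]; rw [e']; ring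
    have hu : Un A w' := ⟨hw', right_ne_zero_of_mul_eq_one hww, by
      rw [inv_eq_of_mul_eq_one_left hww]; exact hw⟩
    have hd : d = 0 := by
      by_contra hd
      apply h2
      rw [eV]
      exact (hψ.pow h.p2.mem hd).mul_left (mul_mem hδ'.1 (pow_mem h.p1.mem c))
    refine ⟨δ' * w' ^ c, c, hδ'.mul (hu.pow c), ?_⟩
    rw [eV, hd, e', mul_pow]; ring
  rcases a1 with a1 | a1 <;> rcases a2 with a2 | a2
  · exact (key h.p1 h1 a1 a2).elim
  · exact fin h eV a1 a2
  · exact fin h.symm (by rw [eV]; ring : V = δ' * q ^ d * p ^ c) a1 a2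
  · exact (key h.p2 h1 a1 a2).elim

end Mono
end MonomCex

/-! ### The obstruction when the lower ring is behind the upper one -/

namespace MonomCex
open LocalMonomial MvPolynomial

section Core
variable {k L : Type*} [Field k] [Field L] [Algebra k L]

lemma par_indep {a b X Y : L} (h : AlgebraicIndependent k ![a, b]) (hp : Par (loc k a b) X Y) :
    Indep (loc k a b) X Y :=
  ⟨par_primeIn h hp, par_primeIn h hp.symm,
    fun hd => par_not_dvd h hp ((par_primeIn h hp).dv_iff.1 hd)⟩

/-- The `Y`-coefficients of a pair of regular parameters in terms of another pair `X, Y` are not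
both in the maximal ideal. -/
lemma coef_un {a b X Y U V α β α' β' : L} (h : AlgebraicIndependent k ![a, b])
    (hp : Par (loc k a b) X Y) (hq : Par (loc k a b) U V)
    (hα : α ∈ loc k a b) (hβ : β ∈ loc k a b) (hα' : α' ∈ loc k a b) (hβ' : β' ∈ loc k a b)
    (eU : U = α * X + β * Y) (eV : V = α' * X + β' * Y) :
    Un (loc k a b) β ∨ Un (loc k a b) β' := by
  by_contra! hn
  obtain ⟨c, hc, c', hc', e⟩ := (hq.dich Y hp.memY).resolve_left hp.notunY
  have hnu : NU (loc k a b) (c * β + c' * β') :=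
    hp.nu_add (hp.nu_mul hc ⟨hβ, hn.1⟩) (hp.nu_mul hc' ⟨hβ', hn.2⟩)
  have hu : Un (loc k a b) (1 + (-1) * (c * β + c' * β')) :=
    hp.un_add_nu (Un.one _) (hp.nu_mul (neg_mem (one_mem _)) hnu)
  apply (par_indep h hp).nd
  refine ⟨(c * α + c' * α') * (1 + (-1) * (c * β + c' * β'))⁻¹,
    mul_mem (add_mem (mul_mem hc hα) (mul_mem hc' hα')) hu.2.2, ?_⟩
  rw [← mul_assoc, eq_mul_inv_iff_mul_eq₀ hu.2.1]
  rw [eU, eV] at e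
  linear_combination e

/-- A regular parameter is not in the square of the maximal ideal. -/
lemma coef_un' {a b X Y U V α β : L} (h : AlgebraicIndependent k ![a, b])
    (hp : Par (loc k a b) X Y) (hq : Par (loc k a b) U V)
    (hα : α ∈ loc k a b) (hβ : β ∈ loc k a b)
    (eU : U = α * X + β * Y) :
    Un (loc k a b) α ∨ Un (loc k a b) β := by
  by_contra! hn
  obtain ⟨c, hc, c', hc', e⟩ := (hq.dich Y hp.memY).resolve_left hp.notunY
  obtain ⟨d, hd, d', hd', e'⟩ := (hq.dich X hp.memX).resolve_left hp.notunX
  have hnu : NU (loc k a b) (d * α + c * β) :=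
    hp.nu_add (hp.nu_mul hd ⟨hα, hn.1⟩) (hp.nu_mul hc ⟨hβ, hn.2⟩)
  have hu : Un (loc k a b) (1 + (-1) * (d * α + c * β)) :=
    hp.un_add_nu (Un.one _) (hp.nu_mul (neg_mem (one_mem _)) hnu)
  apply (par_indep h hq).symm.nd
  refine ⟨(d' * α + c' * β) * (1 + (-1) * (d * α + c * β))⁻¹,
    mul_mem (add_mem (mul_mem hd' hα) (mul_mem hc' hβ)) hu.2.2, ?_⟩
  rw [← mul_assoc, eq_mul_inv_iff_mul_eq₀ hu.2.1]
  rw [e, e'] at eU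
  linear_combination eU

variable {K : IntermediateField k L}

namespace Stage
variable (s : Stage K) {t : Stage K}

/-- Elements `α u + β v` of the lower ring of a stage with `β` a unit: their strict transforms
pass through the next point. -/
def VT (g : L) : Prop := ∃ α ∈ s.R, ∃ β, Un s.R β ∧ g = α * s.u + β * s.v

lemma R_le_S' : s.R ≤ s.S' := fun _ hz => s.domSS'.1 (s.domRS.1 hz)
lemma S_le_S' : s.S ≤ s.S' := fun _ hz => s.domSS'.1 hz

lemma x_eq : s.x = s.x / s.y * s.y := (div_mul_cancel₀ _ s.y_ne).symm
lemma u_eq : s.u = s.y ^ 2 * (s.γ * (s.x / s.y) ^ 2) := by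
  rw [s.hu]; have := s.y_ne; field_simp
lemma v_eq : s.v = s.y * (s.τ * s.y + s.x / s.y * s.Ω) := by
  rw [s.hv]; have := s.y_ne; field_simp

lemma indepxy : Indep s.S' (s.x / s.y) s.y := par_indep s.indS' s.parS'

/-- The shape of the elements of `VT` in the upper ring. -/
lemma VT.eq {s : Stage K} {α β : L} (hα : α ∈ s.R) (hβ : Un s.R β) {ψ : L}
    (hψ : ψ = β * (s.τ * s.y + s.x / s.y * s.Ω) + α * s.γ * (s.x / s.y) ^ 2 * s.y) :
    α * s.u + β * s.v = s.y * ψ ∧ Indep s.S' s.y ψ ∧ Indep s.S' (s.x / s.y) ψ := by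
  have hξ : Un s.S' (β * s.Ω + (α * s.γ * s.y) * (s.x / s.y) + 0 * s.y) :=
    s.parS'.un_add ((hβ.mono s.R_le_S').mul (s.hΩ.mono s.S_le_S'))
      (mul_mem (mul_mem (s.R_le_S' hα) (s.S_le_S' s.γ_un.1)) s.parS'.memY) (zero_mem _)
  have hζ : Un s.S' (β * s.τ) := (hβ.mono s.R_le_S').mul (s.hτ.mono s.S_le_S')
  have e : ψ = (β * s.Ω + (α * s.γ * s.y) * (s.x / s.y) + 0 * s.y) * (s.x / s.y)
      + (β * s.τ) * s.y := by rw [hψ]; ring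
  have e' : ψ = (β * s.τ) * s.y + (β * s.Ω + (α * s.γ * s.y) * (s.x / s.y) + 0 * s.y) * (s.x / s.y)
      := by rw [hψ]; ring
  refine ⟨?_, ?_, ?_⟩
  · rw [s.u_eq, s.v_eq, hψ]; ring
  · rw [e]
    exact (par_indep s.indS' ((s.parS'.scaleX hξ).shearX hζ.1)).symm
  · rw [e']
    exact (par_indep s.indS' ((s.parS'.symm.scaleX hζ).shearX hξ.1)).symm

variable {s}

lemma Next.R_le [Algebra.IsAlgebraic K L] (h : s.Next t) : s.R ≤ t.R := fun _ hz => h.domR.1 hz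
lemma Next.R'_le [Algebra.IsAlgebraic K L] (h : s.Next t) : s.R' ≤ t.R := fun _ hz => h.domR'.1 hz

/-- An element of `VT` becomes the new exceptional parameter, up to a unit. -/
lemma Next.VT_eq [Algebra.IsAlgebraic K L] (h : s.Next t) {g : L} (hg : s.VT g) :
    ∃ ε, Un t.R ε ∧ g = ε * t.u := by
  have hle := h.R_le
  obtain ⟨μ, c, -, -, -, -, hx, ex⟩ := h
  obtain ⟨α, hα, β, hβ, rfl⟩ := hg
  refine ⟨β + (α * (t.v + algebraMap k L c)) * t.u + 0 * t.v, t.parR.un_add (hβ.mono hle)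
    (mul_mem (hle hα) (add_mem t.parR.memY (mem_C _ _))) (zero_mem _), ?_⟩
  rw [ex, ← hx]; ring

lemma Next.u_eq' [Algebra.IsAlgebraic K L] (h : s.Next t) :
    ∃ ε, Un t.R ε ∧ s.u = ε * t.u ^ 2 := by
  obtain ⟨μ, c, -, hc, -, -, hx, ex⟩ := h
  refine ⟨algebraMap k L c + 0 * t.u + 1 * t.v, t.parR.un_add (Un.C _ hc) (zero_mem _)
    (one_mem _), ?_⟩
  rw [ex, ← hx]; ring

/-- With `v, u` the parameters of the next lower ring, an element `(v + c) δ + r`, where `δ, r` are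
constants modulo `u` and one of them is a unit, either is a unit or, if its residue vanishes, has
`v`-coefficient a nonzero constant. -/
lemma un_or_VT {A : Subalgebra k L} (hA : A ≤ t.R)
    (hres : ∀ z ∈ A, ∃ c : k, ∃ p ∈ t.R, z = algebraMap k L c + t.u * p) {δ r : L}
    (hδ : δ ∈ A) (hr : r ∈ A) (hu : Un A δ ∨ Un A r) {c : k} :
    Un t.R ((t.v + algebraMap k L c) * δ + r) ∨ t.VT ((t.v + algebraMap k L c) * δ + r) := by
  obtain ⟨a₀, p, hp, eδ⟩ := hres δ hδ
  obtain ⟨b₀, q, hq, er⟩ := hres r hr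
  have hw : p * (t.v + algebraMap k L c) + q ∈ t.R :=
    add_mem (mul_mem hp (add_mem t.parR.memY (mem_C _ _))) hq
  by_cases h0 : a₀ * c + b₀ = 0
  · right
    have ha : a₀ ≠ 0 := by
      rintro rfl
      obtain rfl : b₀ = 0 := by simpa using h0
      have key : ∀ p ∈ t.R, ¬ Un t.R (algebraMap k L 0 + t.u * p) := fun p hp => by
        rw [map_zero, zero_add, mul_comm]
        exact (t.parR.nu_mul hp t.parR.nuX).2
      rcases hu with hu | hu
      · exact key p hp (eδ ▸ hu.mono hA)
      · exact key q hq (er ▸ hu.mono hA)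
    refine ⟨_, hw, _, Un.C _ ha, ?_⟩
    have : algebraMap k L a₀ * algebraMap k L c + algebraMap k L b₀ = 0 := by
      rw [← map_mul, ← map_add, h0, map_zero]
    rw [eδ, er]
    linear_combination this
  · left
    have := t.parR.un_add (Un.C _ h0) hw (mem_C _ a₀)
    convert this using 1
    rw [eδ, er, map_add, map_mul]; ring

/-- A regular parameter of one of the lower rings, seen in the next stage. -/
lemma Next.param [Algebra.IsAlgebraic K L] (h : s.Next t) {U V : L}
    (hp : Par s.R U V ∨ Par s.R' U V) :
    ∃ e g, e ≠ 0 ∧ U = t.u ^ e * g ∧ (Un t.R g ∨ t.VT g) := by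
  have hle := h.R_le
  have hle' := h.R'_le
  have hVT := fun g => h.VT_eq (g := g)
  obtain ⟨μ, c, -, hc, -, -, hx, ex⟩ := h
  rcases hp with hp | hp
  · obtain ⟨α, hα, β, hβ, eU⟩ := (s.parR.dich U hp.memX).resolve_left hp.notunX
    by_cases hβu : Un s.R β
    · obtain ⟨ε, hε, e⟩ := hVT U ⟨α, hα, β, hβu, eU⟩
      exact ⟨1, ε, one_ne_zero, by rw [e]; ring, Or.inl hε⟩
    · have hαu := (coef_un' s.ind' s.parR hp hα hβ eU).resolve_right hβu
      obtain ⟨p, hp', q, hq, eβ⟩ := (s.parR.dich β hβ).resolve_left hβu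
      have hδ : Un s.R (α + 0 * s.u + p * s.v) := s.parR.un_add hαu (zero_mem _) hp'
      refine ⟨2, (t.v + algebraMap k L c) * (α + 0 * s.u + p * s.v) + q, two_ne_zero, ?_,
        un_or_VT hle ?_ hδ.1 hq (Or.inl hδ)⟩
      · rw [eU, eβ, ex, ← hx]; ring
      · intro z hz
        obtain ⟨c', s', hs', t', ht', e⟩ := loc_decomp s.ind' hz
        refine ⟨c', s' * (t.u * (t.v + algebraMap k L c)) + t', add_mem (mul_mem (hle hs')
          (mul_mem t.parR.memX (add_mem t.parR.memY (mem_C _ _)))) (hle ht'), ?_⟩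
        rw [e, ex, ← hx]; ring
  · obtain ⟨α, hα, β, hβ, eU⟩ := (s.parR'.dich U hp.memX).resolve_left hp.notunX
    have ex' : s.u / s.v = t.u * (t.v + algebraMap k L c) := by
      rw [ex, ← hx]; have := t.u_ne; field_simp
    refine ⟨1, (t.v + algebraMap k L c) * α + β, one_ne_zero, ?_, un_or_VT hle' ?_ hα hβ
      (coef_un' s.indR' s.parR' hp hα hβ eU)⟩
    · rw [eU, ex', ← hx]; ring
    · intro z hz
      obtain ⟨c', s', hs', t', ht', e⟩ := loc_decomp s.indR' hz
      refine ⟨c', s' * (t.v + algebraMap k L c) + t', add_mem (mul_mem (hle' hs')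
        (add_mem t.parR.memY (mem_C _ _))) (hle' ht'), ?_⟩
      rw [e, ex', ← hx]; ring

/-- The obstruction: `U, V` are not independent monomials in `S'`, and are not both powers of `y`
up to units. -/
def Core (s : Stage K) (U V : L) : Prop :=
  ¬ Mono s.S' U V ∧ ∃ r, Indep s.S' s.y r ∧ (Dv s.S' r U ∨ Dv s.S' r V)

lemma Core.symm {U V : L} (h : s.Core U V) : s.Core V U :=
  ⟨fun hm => h.1 hm.symm, h.2.imp fun _ h => ⟨h.1, h.2.symm⟩⟩

lemma dvx_u : Dv s.S' (s.x / s.y) s.u := by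
  rw [s.u_eq]
  exact ((Dv.self _).pow s.parS'.memX two_ne_zero |>.mul_left (s.S_le_S' s.γ_un.1)).mul_left
    (pow_mem s.parS'.memY 2)
lemma dvy_u : Dv s.S' s.y s.u := by
  rw [s.u_eq]
  exact ((Dv.self _).pow s.parS'.memY two_ne_zero).mul_right
    (mul_mem (s.S_le_S' s.γ_un.1) (pow_mem s.parS'.memX 2))
lemma u_mem : s.u ∈ s.S' := s.R_le_S' s.parR.memX

/-- An element `g u^e` with `g` in `VT` is divisible by the three primes `x / y`, `y` and `g / y`, so it
is not a monomial in two primes. -/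
lemma core_of_VT {U V g : L} {e : ℕ} (he : e ≠ 0) (hg : s.VT g) (eU : U = g * s.u ^ e) :
    s.Core U V := by
  obtain ⟨α, hα, β, hβ, eg⟩ := hg
  obtain ⟨h1, h2, h3⟩ := VT.eq hα hβ rfl
  rw [h1] at eg
  have hgm : g ∈ s.S' := eg ▸ mul_mem s.parS'.memY h2.p2.mem
  have hum : s.u ^ e ∈ s.S' := pow_mem s.u_mem e
  have hx : Dv s.S' (s.x / s.y) U := eU ▸ (s.dvx_u.pow s.u_mem he).mul_left hgm
  refine ⟨fun hm => hm.not_three s.indepxy h3 h2 hx ?_ ?_, _, s.indepxy.symm, Or.inl hx⟩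
  · rw [eU]; exact (s.dvy_u.pow s.u_mem he).mul_left hgm
  · rw [eU, eg]
    exact Dv.mul_right ⟨_, s.parS'.memY, mul_comm _ _⟩ hum

/-- Powers of one element, up to units, have proportional exponent vectors. -/
lemma core_of_pow {U V ε ε' : L} {e e' : ℕ} (he : e ≠ 0) (he' : e' ≠ 0) (hε : Un s.S' ε)
    (hε' : Un s.S' ε') (eU : U = ε * s.u ^ e) (eV : V = ε' * s.u ^ e') : s.Core U V := by
  refine ⟨fun hm => hm.not_rel (E := e') (F := e) ((hε.pow e').mul (hε'.pow e).inv) he' ?_,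
    _, s.indepxy.symm, Or.inl ?_⟩
  · have := (hε'.pow e).2.1
    rw [eU, eV]
    rw [mul_pow, mul_pow, mul_assoc, inv_mul_cancel_left₀ this, ← pow_mul, ← pow_mul, mul_comm e]
  · rw [eU]; exact (s.dvx_u.pow s.u_mem he).mul_left hε.1

end Stage

variable {st : ℕ → Stage K}

lemma R_le [Algebra.IsAlgebraic K L] (hst : ∀ n, (st n).Next (st (n + 1))) {m n : ℕ}
    (h : m ≤ n) : (st m).R ≤ (st n).R := fun _ hz => (domR_le hst h).1 hz

/-- The exceptional parameter `u` of a stage is a power of every later one, up to a unit. -/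
lemma u_lift [Algebra.IsAlgebraic K L] (hst : ∀ n, (st n).Next (st (n + 1))) {j n : ℕ}
    (h : j ≤ n) : ∃ ε E, Un (st n).R ε ∧ E ≠ 0 ∧ (st j).u = ε * (st n).u ^ (E : ℕ) := by
  induction n, h using Nat.le_induction with
  | base => exact ⟨1, 1, Un.one _, one_ne_zero, by simp⟩
  | succ n _ ih =>
    obtain ⟨ε, E, hε, hE, e⟩ := ih
    obtain ⟨ε', hε', e'⟩ := (hst n).u_eq'
    refine ⟨ε * ε' ^ E, 2 * E, (hε.mono (hst n).R_le).mul (hε'.pow E), by omega, ?_⟩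
    rw [e, e', mul_pow, pow_mul]; ring

/-- The second factor obtained in `Next.param` stays, in all later stages, a unit times a power of
`u` or an element of `VT`. -/
lemma g_lift [Algebra.IsAlgebraic K L] (hst : ∀ n, (st n).Next (st (n + 1))) {j n : ℕ}
    (h : j ≤ n) {g : L} (hg : Un (st j).R g ∨ (st j).VT g) :
    (∃ ε E, Un (st n).R ε ∧ g = ε * (st n).u ^ (E : ℕ)) ∨ (st n).VT g := by
  rcases hg with hg | hg
  · exact Or.inl ⟨g, 0, hg.mono (R_le hst h), by simp⟩
  · rcases h.eq_or_lt with rfl | h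
    · exact Or.inr hg
    · obtain ⟨ε, hε, e⟩ := (hst j).VT_eq hg
      obtain ⟨ε', E, hε', -, e'⟩ := u_lift hst (Nat.succ_le_of_lt h)
      exact Or.inl ⟨ε * ε', E, (hε.mono (R_le hst h)).mul hε', by rw [e, e']; ring⟩

/-- The obstruction when the upper ring is strictly further along the sequence. -/
lemma core_lt [Algebra.IsAlgebraic K L] (hst : ∀ n, (st n).Next (st (n + 1))) {m n : ℕ}
    (h : m < n) {U V : L} (hp : Par (st m).R U V ∨ Par (st m).R' U V) : (st n).Core U V := by
  have key : ∀ {U V : L}, (Par (st m).R U V ∨ Par (st m).R' U V) →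
      (∃ ε e, Un (st n).S' ε ∧ e ≠ 0 ∧ U = ε * (st n).u ^ (e : ℕ)) ∨
      (∃ e g, e ≠ 0 ∧ (st n).VT g ∧ U = g * (st n).u ^ (e : ℕ)) := by
    intro U V hp
    obtain ⟨e, g, he, eU, hg⟩ := (hst m).param hp
    obtain ⟨ε, E, hε, hE, eu⟩ := u_lift hst (Nat.succ_le_of_lt h)
    rcases g_lift hst (Nat.succ_le_of_lt h) hg with ⟨ε', E', hε', eg⟩ | hg
    · refine Or.inl ⟨ε ^ e * ε', E * e + E', ((hε.pow e).mul hε').mono (st n).R_le_S',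
        by simp [hE, he], ?_⟩
      rw [eU, eu, eg, mul_pow, pow_add, pow_mul]; ring
    · obtain ⟨α, hα, β, hβ, eg⟩ := hg
      refine Or.inr ⟨E * e, ε ^ e * g, by simp [hE, he], ⟨ε ^ e * α, mul_mem (hε.pow e).1 hα,
        ε ^ e * β, (hε.pow e).mul hβ, by rw [eg]; ring⟩, ?_⟩
      rw [eU, eu, mul_pow, pow_mul]; ring
  rcases key hp with ⟨ε, e, hε, he, eU⟩ | ⟨e, g, he, hg, eU⟩
  · rcases key (hp.imp Par.symm Par.symm) with ⟨ε', e', hε', he', eV⟩ | ⟨e', g, he', hg, eV⟩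
    · exact Stage.core_of_pow he he' hε hε' eU eV
    · exact (Stage.core_of_VT he' hg eV).symm
  · exact Stage.core_of_VT he hg eU

end Core
end MonomCex

/-! ### The obstruction within one stage -/

namespace MonomCex
open LocalMonomial MvPolynomial

section NonMono
variable {k L : Type*} [Field k] [Field L] [Algebra k L]
variable {K : IntermediateField k L}

namespace Stage
variable {s : Stage K}

lemma psi_nu (s : Stage K) : NU s.S' (s.τ * s.y + s.x / s.y * s.Ω) := by
  rw [mul_comm (s.x / s.y)]
  exact s.parS'.nu_add (s.parS'.nu_mul (s.S_le_S' s.hτ.1) s.parS'.nuY)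
    (s.parS'.nu_mul (s.S_le_S' s.hΩ.1) s.parS'.nuX)

/-- Elements of the lower ring are constants modulo `y m`, with `m` the maximal ideal of `S'`. -/
lemma residue_R {z : L} (hz : z ∈ s.R) : ∃ c : k, ∃ w, NU s.S' w ∧ z = algebraMap k L c + s.y * w := by
  obtain ⟨c, p, hp, q, hq, e⟩ := loc_decomp s.ind' hz
  refine ⟨c, p * (s.γ * (s.x / s.y) ^ 2) * s.y + q * (s.τ * s.y + s.x / s.y * s.Ω),
    s.parS'.nu_add (s.parS'.nu_mul (mul_mem (s.R_le_S' hp) (mul_mem (s.S_le_S' s.γ_un.1)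
      (pow_mem s.parS'.memX 2))) s.parS'.nuY) (s.parS'.nu_mul (s.R_le_S' hq) s.psi_nu), ?_⟩
  rw [e, s.u_eq, s.v_eq]; ring

/-- Elements of the upper ring `S` are constants modulo `y` in `S'`. -/
lemma residue_S {z : L} (hz : z ∈ s.S) : ∃ c : k, ∃ w ∈ s.S', z = algebraMap k L c + s.y * w := by
  obtain ⟨c, p, hp, q, hq, e⟩ := loc_decomp s.ind hz
  refine ⟨c, p * (s.x / s.y) + q, add_mem (mul_mem (s.S_le_S' hp) s.parS'.memX)
    (s.S_le_S' hq), ?_⟩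
  rw [e]; nth_rw 1 [s.x_eq]; ring

/-- In `α u + β v²` the coefficient of `y² x'²`, where `x' = x / y`, is `α γ + β Ω²`. Its linear term
in `y` is a unit, coming from the linear term of `γ`: in characteristic two `Ω²` contributes none. -/
lemma residue_W [CharP k 2] {α β : L} (hα : Un s.R α) (hβ : β ∈ s.R) :
    ∃ c : k, ∃ η, Un s.S' η ∧ α * s.γ + β * s.Ω ^ 2 = algebraMap k L c + s.y * η := by
  have h2 : (2 : L) = 0 := by
    have := congrArg (algebraMap k L) (CharP.cast_eq_zero k 2)
    rwa [Nat.cast_ofNat, map_ofNat, map_zero] at this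
  obtain ⟨a₀, p, hp, eα⟩ := residue_R hα.1
  obtain ⟨b₀, q, hq, eβ⟩ := residue_R hβ
  obtain ⟨γ₀, hγ₀, e, he, f, hf, eγ⟩ := s.hγ
  obtain ⟨Ω₀, w, hw, eΩ⟩ := residue_S s.hΩ.1
  have hP := s.parS'
  have ha : a₀ ≠ 0 := by
    rintro rfl
    rw [map_zero, zero_add, mul_comm] at eα
    exact (hP.nu_mul hp.1 hP.nuY).2 (eα ▸ hα.mono s.R_le_S')
  have mΩ := s.S_le_S' s.hΩ.1
  have mf := s.S_le_S' hf
  have hn : NU s.S' (algebraMap k L a₀ * f * (s.x / s.y) + s.γ * p + s.Ω ^ 2 * q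
      + (algebraMap k L b₀ * w ^ 2) * s.y) :=
    hP.nu_add (hP.nu_add (hP.nu_add (hP.nu_mul (mul_mem (mem_C _ _) mf) hP.nuX)
      (hP.nu_mul (s.S_le_S' s.γ_un.1) hp)) (hP.nu_mul (pow_mem mΩ 2) hq))
      (hP.nu_mul (mul_mem (mem_C _ _) (pow_mem hw 2)) hP.nuY)
  refine ⟨a₀ * γ₀ + b₀ * Ω₀ ^ 2, _,
    hP.un_add_nu ((Un.C _ ha).mul (he.mono s.S_le_S')) hn, ?_⟩
  have eΩ2 : s.Ω ^ 2 = algebraMap k L Ω₀ ^ 2 + s.y ^ 2 * w ^ 2 := by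
    rw [eΩ]; linear_combination (algebraMap k L Ω₀ * s.y * w) * h2
  have eα' : α * s.γ = algebraMap k L a₀ * s.γ + s.y * (s.γ * p) := by rw [eα]; ring
  have eβ' : β * s.Ω ^ 2 = algebraMap k L b₀ * s.Ω ^ 2 + s.y * (s.Ω ^ 2 * q) := by rw [eβ]; ring
  have ex := s.x_eq
  rw [map_add, map_mul, map_mul, map_pow]
  linear_combination eα' + eβ' + algebraMap k L a₀ * eγ + algebraMap k L b₀ * eΩ2
    + algebraMap k L a₀ * f * ex

/-- The obstruction for the rings of one stage, in the case of a parameter `U` transversal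
to `u` and a parameter `V` tangent to it. Here `U = y ψ'` and `V = y² q` with `ψ'` a prime not
dividing `q`, so monomiality would force `V` to be a power of `y` up to a unit; but `q` is not a
unit times a power of `y`, by `residue_W`. -/
lemma core_tangent [CharP k 2] {α β α' β' : L} (hα : α ∈ s.R) (hβ : Un s.R β) (hα' : Un s.R α')
    (hβ' : β' ∈ s.R) : s.Core (α * s.u + β * s.v) (α' * s.u + β' * s.v ^ 2) := by
  have h2 : (2 : L) = 0 := by
    have := congrArg (algebraMap k L) (CharP.cast_eq_zero k 2)
    rwa [Nat.cast_ofNat, map_ofNat, map_zero] at this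
  obtain ⟨ψ', hψ'⟩ : ∃ ψ', ψ' = β * (s.τ * s.y + s.x / s.y * s.Ω)
    + α * s.γ * (s.x / s.y) ^ 2 * s.y := ⟨_, rfl⟩
  obtain ⟨eU, hy, hx⟩ := VT.eq hα hβ hψ'
  have hP := s.parS'
  rw [eU]
  refine ⟨fun hm => ?_, ψ', hy, Or.inl ⟨_, hP.memY, mul_comm _ _⟩⟩
  have mα := s.R_le_S' hα
  have mβ := s.R_le_S' hβ.1
  have mα' := s.R_le_S' hα'.1
  have mβ' := s.R_le_S' hβ'
  have mγ := s.S_le_S' s.γ_un.1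
  have mx := hP.memX
  have my := hP.memY
  obtain ⟨x', hx'⟩ : ∃ x', x' = s.x / s.y := ⟨_, rfl⟩
  obtain ⟨ψ, hψ⟩ : ∃ ψ, ψ = s.τ * s.y + x' * s.Ω := ⟨_, rfl⟩
  have hψnu := s.psi_nu
  have eu := s.u_eq
  have ev := s.v_eq
  have hxy := s.indepxy
  have nuX := hP.nuX
  rw [← hx'] at hψ' hx mx eu ev hxy nuX hψnu
  rw [← hψ] at hψ' hψnu ev
  obtain ⟨q, hq⟩ : ∃ q, q = α' * s.γ * x' ^ 2 + β' * ψ ^ 2 := ⟨_, rfl⟩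
  have eV : α' * s.u + β' * s.v ^ 2 = s.y ^ 2 * q := by rw [eu, ev, hq]; ring
  have hqnu : NU s.S' q := by
    rw [hq]
    exact hP.nu_add (hP.nu_mul (mul_mem mα' mγ) (hP.nu_pow nuX two_ne_zero))
      (hP.nu_mul mβ' (hP.nu_pow hψnu two_ne_zero))
  rw [eV] at hm
  have hnd : ¬ Dv s.S' ψ' (s.y ^ 2 * q) := by
    intro hd
    rcases hy.p2.dv_mul (pow_mem my 2) hqnu.1 hd with hd | hd
    · exact hy.symm.nd (hy.p2.dv_pow my hd)
    · -- modulo `ψ'` the factor `q` is `x'²` times a unit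
      have hu : Un s.S' (β ^ 2 * α' * s.γ + 0 * (s.x / s.y)
          + β' * α ^ 2 * s.γ ^ 2 * x' ^ 2 * s.y * s.y) :=
        hP.un_add ((((hβ.pow 2).mul hα').mono s.R_le_S').mul (s.γ_un.mono s.S_le_S'))
          (zero_mem _) (mul_mem (mul_mem (mul_mem (mul_mem mβ' (pow_mem mα 2)) (pow_mem mγ 2))
            (pow_mem mx 2)) my)
      apply hx.symm.not_dv_mono hu (b := 2)
      have e : (β ^ 2 * α' * s.γ + 0 * (s.x / s.y) + β' * α ^ 2 * s.γ ^ 2 * x' ^ 2 * s.y * s.y)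
          * x' ^ 2 = β ^ 2 * q - ψ' * (β' * (ψ' - 2 * (α * s.γ * x' ^ 2 * s.y))) := by
        rw [hq, hψ']; ring
      rw [e]
      exact (hd.mul_left (pow_mem mβ 2)).sub ⟨_, mul_mem mβ' (sub_mem hy.p2.mem
        (mul_mem (ofNat_mem _ 2) (mul_mem (mul_mem (mul_mem mα mγ) (pow_mem mx 2)) my))), rfl⟩
  obtain ⟨ε, i, hε, e⟩ := hm.pow_of_not_dv hy hnd
  have hy0 := s.y_ne
  have hyp := hy.p1
  rcases le_or_gt i 2 with hi | hi
  · obtain ⟨j, hj⟩ := Nat.exists_eq_add_of_le hi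
    refine (hP.nu_mul (pow_mem my j) hqnu).2 ?_
    rw [hj, pow_add, mul_assoc, mul_comm ε] at e
    rw [mul_left_cancel₀ (pow_ne_zero _ hy0) e]; exact hε
  · obtain ⟨j, rfl⟩ := Nat.exists_eq_add_of_lt hi
    have eq : q = ε * s.y ^ j * s.y := by
      refine mul_left_cancel₀ (pow_ne_zero 2 hy0) ?_
      rw [e]; ring
    obtain ⟨c, η, hη, eW⟩ := residue_W hα' hβ'
    have eq' : q = x' ^ 2 * (α' * s.γ + β' * s.Ω ^ 2) + s.y * (β' * s.τ ^ 2 * s.y) := by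
      rw [hq, hψ]; linear_combination (β' * s.τ * s.y * x' * s.Ω) * h2
    have mW : β' * s.τ ^ 2 * s.y ∈ s.S' :=
      mul_mem (mul_mem mβ' (pow_mem (s.S_le_S' s.hτ.1) 2)) my
    have hc : c = 0 := by
      by_contra hc
      have hd : Dv s.S' s.y ((algebraMap k L c + s.y * η) * x' ^ 2) := by
        have : (algebraMap k L c + s.y * η) * x' ^ 2 = q - s.y * (β' * s.τ ^ 2 * s.y) := by
          rw [eq', eW]; ring
        rw [this]
        refine Dv.sub ⟨ε * s.y ^ j, mul_mem hε.1 (pow_mem my j), ?_⟩ ⟨_, mW, rfl⟩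
        rw [eq]; ring
      refine hxy.symm.not_dv_mono (hP.un_add_nu (Un.C _ hc) ?_) hd
      rw [mul_comm]; exact hP.nu_mul hη.1 hP.nuY
    rw [eW, hc, map_zero, zero_add] at eq'
    have e3 : ε * s.y ^ j = x' ^ 2 * η + β' * s.τ ^ 2 * s.y := by
      refine mul_right_cancel₀ hy0 ?_
      rw [← eq, eq']; ring
    rcases Nat.eq_zero_or_pos j with rfl | hj
    · have hnu : NU s.S' (x' ^ 2 * η + β' * s.τ ^ 2 * s.y) := by
        rw [mul_comm _ η]
        exact hP.nu_add (hP.nu_mul hη.1 (hP.nu_pow nuX two_ne_zero))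
          (hP.nu_mul (mul_mem mβ' (pow_mem (s.S_le_S' s.hτ.1) 2)) hP.nuY)
      rw [← e3, pow_zero, mul_one] at hnu
      exact hnu.2 hε
    · refine hxy.symm.not_dv_mono hη (b := 2) ?_
      have : η * x' ^ 2 = ε * s.y ^ j - β' * s.τ ^ 2 * s.y := by rw [e3]; ring
      rw [this]
      exact (((Dv.self _).pow my hj.ne').mul_left hε.1).sub ⟨_, mul_mem mβ'
        (pow_mem (s.S_le_S' s.hτ.1) 2), mul_comm _ _⟩

/-- The obstruction for the rings of one stage. -/
lemma core_same [CharP k 2] {U V : L} (hp : Par s.R U V) : s.Core U V := by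
  obtain ⟨α, hα, β, hβ, eU⟩ := (s.parR.dich U hp.memX).resolve_left hp.notunX
  obtain ⟨α', hα', β', hβ', eV⟩ := (s.parR.dich V hp.memY).resolve_left hp.notunY
  have main : ∀ {U V α β α' β' : L}, Par s.R U V → α ∈ s.R → α' ∈ s.R → β' ∈ s.R →
      U = α * s.u + β * s.v → V = α' * s.u + β' * s.v → Un s.R β → s.Core U V := by
    intro U V α β α' β' hp hα hα' hβ' eU eV hβ
    by_cases hu : Un s.R β'
    · obtain ⟨e1, hy, -⟩ := VT.eq hα hβ rfl
      obtain ⟨e2, hy', -⟩ := VT.eq hα' hu rfl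
      rw [← eU] at e1
      rw [← eV] at e2
      refine ⟨fun hm => ?_, _, hy, Or.inl ⟨_, s.parS'.memY, by rw [e1, mul_comm]⟩⟩
      rw [e1, e2] at hm
      exact hm.not_yy hy hy'
    · have hαu := (coef_un' s.ind' s.parR hp.symm hα' hβ' eV).resolve_right hu
      obtain ⟨p, hp', q, hq, e⟩ := (s.parR.dich β' hβ').resolve_left hu
      have := core_tangent hα hβ (s.parR.un_add hαu (zero_mem _) hp') hq
      rw [← eU] at this
      convert this using 1
      rw [eV, e]; ring
  rcases coef_un s.ind' s.parR hp hα hβ hα' hβ' eU eV with h | h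
  · exact main hp hα hα' hβ' eU eV h
  · exact (main hp.symm hα' hα hβ eV eU h).symm

/-- In `S'` the prime `v / y` divides `v` but not `u = y² γ (x / y)²`. -/
lemma u_div_v_not_mem (s : Stage K) : s.u / s.v ∉ s.S' := by
  intro h
  obtain ⟨ψ, hψ⟩ : ∃ ψ, ψ = 1 * (s.τ * s.y + s.x / s.y * s.Ω)
    + 0 * s.γ * (s.x / s.y) ^ 2 * s.y := ⟨_, rfl⟩
  obtain ⟨e, hy, hx⟩ := VT.eq (s := s) (α := 0) (β := 1) (zero_mem _) (Un.one _) hψ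
  have hP := s.parS'
  rw [zero_mul, zero_add, one_mul] at e
  have hd : Dv s.S' ψ (s.γ * (s.x / s.y) ^ 2 * s.y ^ 1) := ⟨_, h, by
    have h0 := hy.p2.ne_zero
    have hy0 := s.y_ne
    rw [e, s.u_eq]
    field_simp⟩
  exact ((hy.p2.dv_mono (a := 2) (b := 1) hP.memX hP.memY (s.γ_un.mono s.S_le_S') hd)).elim
    hx.symm.nd hy.symm.nd

end Stage

lemma zpow_un_dv {A : Subalgebra k L} {y r U ε : L} (h : Indep A y r) (hε : Un A ε) (hU : U ∈ A)
    {i : ℤ} (e : U = ε * y ^ i) : ¬ Dv A r U := by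
  obtain ⟨i, rfl⟩ := Int.eq_ofNat_of_zero_le
    (h.exp_nonneg hε hU (a := i) (b := 0) (by rw [e, zpow_zero, mul_one]))
  rw [e]
  simpa using h.symm.not_dv_mono hε (b := i)

namespace Stage
variable {s : Stage K}

lemma Core.not_monomial' {U V : L} (h : s.Core U V) (hU : U ∈ s.S') (hV : V ∈ s.S')
    {X Y δ δ' : L} (hp : Par s.S' X Y) (hδ : Un s.S' δ) (hδ' : Un s.S' δ') {a b c d : ℤ}
    (eU : U = δ * X ^ a * Y ^ b) (eV : V = δ' * X ^ c * Y ^ d) (hn : a * d ≠ b * c) : False :=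
  h.1 (Mono.of_int (par_indep s.indS' hp) hδ hδ' hU hV eU eV hn)

/-- A monomial expression in parameters `X, Y` of `S` either becomes one in parameters of `S'`, or,
when both `X` and `Y` are `y` times units of `S'`, makes both `U` and `V` powers of `y` up to units.
The two halves of `Core` exclude these. -/
lemma Core.not_monomial {U V : L} (h : s.Core U V) (hU : U ∈ s.S') (hV : V ∈ s.S')
    {X Y δ δ' : L} (hp : Par s.S X Y) (hδ : Un s.S δ) (hδ' : Un s.S δ') {a b c d : ℤ}
    (eU : U = δ * X ^ a * Y ^ b) (eV : V = δ' * X ^ c * Y ^ d) (hn : a * d ≠ b * c) : False := by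
  have main : ∀ {X Y α β : L} {a b c d : ℤ}, Par s.S X Y → α ∈ s.S → X = α * s.x + β * s.y →
      U = δ * X ^ a * Y ^ b → V = δ' * X ^ c * Y ^ d → a * d ≠ b * c → Un s.S β → False := by
    intro X Y α β a b c d hp hα eX eU eV hn hβ
    have hP := s.parS'
    have hle := s.S_le_S'
    have ex := s.x_eq
    have hy0 := s.y_ne
    have hXx : Par s.S X s.x := by
      have := (s.parS.symm.scaleX hβ).shearX hα
      rwa [add_comm, ← eX] at this
    obtain ⟨t, ht, σ, hσ, eY⟩ := (hXx.dich Y hp.memY).resolve_left hp.notunY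
    have hσu : Un s.S σ := by
      rcases coef_un s.ind hXx hp (one_mem _) (zero_mem _) ht hσ (by ring) eY with h0 | h0
      · exact absurd rfl h0.2.1
      · exact h0
    have hη : Un s.S' (β + α * (s.x / s.y) + 0 * s.y) :=
      hP.un_add (hβ.mono hle) (hle hα) (zero_mem _)
    obtain ⟨η, eη⟩ : ∃ η, η = β + α * (s.x / s.y) + 0 * s.y := ⟨_, rfl⟩
    rw [← eη] at hη
    have eX' : X = s.y * η := by rw [eX, eη]; nth_rw 1 [ex]; ring
    by_cases htu : Un s.S t
    · have hη' : Un s.S' (t * η + σ * (s.x / s.y) + 0 * s.y) :=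
        hP.un_add ((htu.mono hle).mul hη) (hle hσ) (zero_mem _)
      obtain ⟨η', eη'⟩ : ∃ η', η' = t * η + σ * (s.x / s.y) + 0 * s.y := ⟨_, rfl⟩
      rw [← eη'] at hη'
      have eY' : Y = s.y * η' := by rw [eY, eX', eη']; nth_rw 1 [ex]; ring
      obtain ⟨r, hr, hd⟩ := h.2
      rcases hd with hd | hd
      · refine zpow_un_dv hr (((hδ.mono hle).mul (hη.zpow a)).mul (hη'.zpow b)) hU
          (i := a + b) ?_ hd
        rw [eU, eX', eY', mul_zpow, mul_zpow, zpow_add₀ hy0]; ring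
      · refine zpow_un_dv hr (((hδ'.mono hle).mul (hη.zpow c)).mul (hη'.zpow d)) hV
          (i := c + d) ?_ hd
        rw [eV, eX', eY', mul_zpow, mul_zpow, zpow_add₀ hy0]; ring
    · obtain ⟨t₁, ht₁, t₂, ht₂, et⟩ := (s.parS.dich t ht).resolve_left htu
      obtain ⟨Z, eZ⟩ : ∃ Z, Z = σ * (s.x / s.y) + ((t₁ * (s.x / s.y) + t₂) * η) * s.y := ⟨_, rfl⟩
      have eY' : Y = s.y * Z := by
        rw [eY, eX', et, eZ]; nth_rw 1 [ex]; nth_rw 2 [ex]; ring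
      have hZ : Par s.S' Z s.y := by
        rw [eZ]
        exact (hP.scaleX (hσu.mono hle)).shearX
          (mul_mem (add_mem (mul_mem (hle ht₁) hP.memX) (hle ht₂)) hη.1)
      refine h.not_monomial' hU hV hZ.symm ((hδ.mono hle).mul (hη.zpow a))
        ((hδ'.mono hle).mul (hη.zpow c)) (a := a + b) (b := b) (c := c + d) (d := d) ?_ ?_ ?_
      · rw [eU, eX', eY', mul_zpow, mul_zpow, zpow_add₀ hy0]; ring
      · rw [eV, eX', eY', mul_zpow, mul_zpow, zpow_add₀ hy0]; ring
      · intro e; apply hn; linear_combination e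
  obtain ⟨α, hα, β, hβ, eX⟩ := (s.parS.dich X hp.memX).resolve_left hp.notunX
  obtain ⟨α', hα', β', hβ', eY⟩ := (s.parS.dich Y hp.memY).resolve_left hp.notunY
  rcases coef_un s.ind s.parS hp hα hβ hα' hβ' eX eY with hu | hu
  · exact main hp hα eX eU eV hn hu
  · refine main (a := b) (b := a) (c := d) (d := c) hp.symm hα' eY ?_ ?_ ?_ hu
    · rw [eU]; ring
    · rw [eV]; ring
    · intro e; exact hn e.symm

end Stage

variable {st : ℕ → Stage K}

/-- No regular parameters of a member of the lower sequence are monomials in regular parameters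
of a member of the upper sequence containing it. -/
theorem not_monomial [CharP k 2] [Algebra.IsAlgebraic K L]
    (hst : ∀ n, (st n).Next (st (n + 1))) {m n : ℕ} {R₁ S₁ : Subalgebra k L}
    (hR : R₁ = (st m).R ∨ R₁ = (st m).R') (hS : S₁ = (st n).S ∨ S₁ = (st n).S')
    (hle : R₁ ≤ S₁) {U V X Y δ δ' : L} (hUV : Par R₁ U V) (hXY : Par S₁ X Y) (hδ : Un S₁ δ)
    (hδ' : Un S₁ δ') {a b c d : ℤ} (eU : U = δ * X ^ a * Y ^ b) (eV : V = δ' * X ^ c * Y ^ d)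
    (hn : a * d ≠ b * c) : False := by
  have hle' : R₁ ≤ (st n).S' := by
    rcases hS with rfl | rfl
    · exact hle.trans (st n).S_le_S'
    · exact hle
  have hmem : (st n).u / (st n).v ∉ R₁ := fun h => (st n).u_div_v_not_mem (hle' h)
  have h1 : ∀ {j}, n < j → (st n).u / (st n).v ∈ (st j).R := fun hj =>
    R_le hst (Nat.succ_le_of_lt hj) ((hst n).R'_le (loc_memX _ _))
  have hcore : (st n).Core U V := by
    rcases hR with rfl | rfl
    · rcases lt_trichotomy m n with h | rfl | h
      · exact core_lt hst h (Or.inl hUV)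
      · exact Stage.core_same hUV
      · exact (hmem (h1 h)).elim
    · rcases lt_or_ge m n with h | h
      · exact core_lt hst h (Or.inr hUV)
      · refine (hmem ?_).elim
        rcases h.eq_or_lt with rfl | h
        · exact loc_memX _ _
        · exact (st m).domRR'.1 (h1 h)
  rcases hS with rfl | rfl
  · exact hcore.not_monomial (hle' hUV.memX) (hle' hUV.memY) hXY hδ hδ' eU eV hn
  · exact hcore.not_monomial' (hle' hUV.memX) (hle' hUV.memY) hXY hδ hδ' eU eV hn

end NonMono
end MonomCex

/-! ### The counterexample -/

namespace MonomCex
open LocalMonomial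

section Final
variable {k L : Type*} [Field k] [Field L] [Algebra k L]

lemma trdeg2 {a b : L} (h : AlgebraicIndependent k ![a, b])
    (ht : IntermediateField.adjoin k {a, b} = ⊤) : IsFunctionFieldTrdeg2 k L := by
  classical
  refine ⟨⟨{a, b}, by simpa using ht⟩, a, b, h, fun z => ?_⟩
  exact isAlgebraic_algebraMap
    (⟨z, by rw [ht]; trivial⟩ : IntermediateField.adjoin k ({a, b} : Set L))

lemma trdeg2_adjoin {a b : L} (h : AlgebraicIndependent k ![a, b]) :
    IsFunctionFieldTrdeg2 k (IntermediateField.adjoin k {a, b}) := by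
  set K := IntermediateField.adjoin k {a, b}
  let a' : K := ⟨a, IntermediateField.subset_adjoin k _ (by simp)⟩
  let b' : K := ⟨b, IntermediateField.subset_adjoin k _ (by simp)⟩
  refine trdeg2 (a := a') (b := b') (AlgebraicIndependent.of_comp K.val ?_) ?_
  · convert h using 1
    ext i; fin_cases i <;> rfl
  · apply IntermediateField.map_injective K.val
    rw [IntermediateField.adjoin_map, Set.image_pair, ← AlgHom.fieldRange_eq_map,
      IntermediateField.fieldRange_val]
    rfl

lemma loc_twoDim {a b : L} (h : AlgebraicIndependent k ![a, b]) {K : Set L}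
    (hK : (IntermediateField.adjoin k {a, b} : Set L) = K) :
    IsTwoDimRegularAlgLocalRingOf (loc k a b) K :=
  ⟨⟨(loc_par h).isLocalRing, loc_essFin h, hK ▸ loc_frac h⟩, loc_regular h, loc_dim h⟩

lemma two_eq_zero [CharP k 2] : (2 : L) = 0 := by
  have := congrArg (algebraMap k L) (CharP.cast_eq_zero k 2)
  rwa [Nat.cast_ofNat, map_ofNat, map_zero] at this

open Polynomial in
/-- The extension `k(x, y)` of `k(x²(1 + y), y² + x)` is generated by `y`, a root of the separable
polynomial `(Y + 1)(Y⁴ + v²) + u`. -/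
lemma ext_finite_separable [CharP k 2] {x y u v : L}
    (hxy : IntermediateField.adjoin k {x, y} = ⊤)
    (hx : x ≠ 0) (hu0 : u ≠ 0) (hu : u = (1 + y) * x ^ 2) (hv : v = y ^ 2 + x) :
    FiniteDimensional (IntermediateField.adjoin k {u, v}) L ∧
      Algebra.IsSeparable (IntermediateField.adjoin k {u, v}) L := by
  have h2 : (2 : L) = 0 := two_eq_zero (k := k)
  set K := IntermediateField.adjoin k {u, v}
  have h2K : (2 : K) = 0 := two_eq_zero (k := k)
  let u' : K := ⟨u, IntermediateField.subset_adjoin k _ (by simp)⟩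
  let v' : K := ⟨v, IntermediateField.subset_adjoin k _ (by simp)⟩
  have hu'0 : u' ≠ 0 := fun e => hu0 (congrArg Subtype.val e)
  obtain ⟨P, hP⟩ : ∃ P : K[X], P = (X + 1) * (X ^ 4 + C (v' ^ 2)) + C u' := ⟨_, rfl⟩
  have h2P : (2 : K[X]) = 0 := by rw [← C_ofNat, h2K, C_0]
  have hd : derivative P = X ^ 4 + C (v' ^ 2) := by
    rw [hP]
    simp only [derivative_add, derivative_mul, derivative_X, derivative_one, derivative_C,
      derivative_X_pow]
    push_cast
    rw [C_ofNat, (by ring : (4 : K[X]) = 2 * 2), h2P]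
    ring
  have hsep : P.Separable := by
    refine ⟨C u'⁻¹, -C u'⁻¹ * (X + 1), ?_⟩
    rw [hd, hP]
    have : C u'⁻¹ * C u' = (1 : K[X]) := by rw [← C_mul, inv_mul_cancel₀ hu'0, C_1]
    linear_combination this
  have hroot : aeval y P = 0 := by
    rw [hP]
    have e1 : algebraMap K L u' = u := rfl
    have e2 : algebraMap K L v' = v := rfl
    simp only [map_add, map_mul, map_pow, aeval_X, map_one, aeval_C, e1, e2]
    rw [hu, hv]
    linear_combination (y ^ 5 + y ^ 4 + (1 + y) * y ^ 2 * x + (1 + y) * x ^ 2) * h2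
  have hP0 : P ≠ 0 := hsep.ne_zero
  have hys : IsSeparable K y := hsep.of_dvd (minpoly.dvd K y hroot)
  have htop : IntermediateField.adjoin K {y} = ⊤ := by
    have hmem : (IntermediateField.adjoin k {x, y} : Set L) ⊆ IntermediateField.adjoin K {y} := by
      have : IntermediateField.adjoin k {x, y}
          ≤ (IntermediateField.adjoin K {y}).restrictScalars k := by
        rw [IntermediateField.adjoin_le_iff]
        have hy : y ∈ IntermediateField.adjoin K {y} := IntermediateField.mem_adjoin_simple_self K y
        rintro z (rfl | rfl)
        · have e : z = algebraMap K L v' - y ^ 2 := by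
            change z = v - y ^ 2
            rw [hv]; ring
          change z ∈ IntermediateField.adjoin K {y}
          rw [e]
          exact sub_mem (IntermediateField.algebraMap_mem _ _) (pow_mem hy 2)
        · exact hy
      exact this
    rw [hxy] at hmem
    exact top_le_iff.1 fun z _ => hmem trivial
  have hint : IsIntegral K y := hys.isIntegral
  have f1 : FiniteDimensional K (IntermediateField.adjoin K {y}) :=
    IntermediateField.adjoin.finiteDimensional hint
  have f2 : Algebra.IsSeparable K (IntermediateField.adjoin K {y}) :=
    (IntermediateField.isSeparable_adjoin_simple_iff_isSeparable K L).2 hys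
  rw [htop] at f1 f2
  exact ⟨LinearEquiv.finiteDimensional (IntermediateField.topEquiv (F := K) (E := L)).toLinearEquiv,
    (AlgEquiv.Algebra.isSeparable_iff IntermediateField.topEquiv).1 f2⟩

lemma rank_two {A : Matrix (Fin 2) (Fin 2) ℤ} (h : (A.map (fun a : ℤ => (a : ℚ))).rank = 2) :
    A 0 0 * A 1 1 ≠ A 0 1 * A 1 0 := by
  have hs : Function.Surjective (A.map (fun a : ℤ => (a : ℚ))).mulVec := by
    change Function.Surjective (A.map (fun a : ℤ => (a : ℚ))).mulVecLin
    rw [← LinearMap.range_eq_top]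
    apply Submodule.eq_top_of_finrank_eq
    rw [Module.finrank_fin_fun]
    exact h
  rw [Matrix.mulVec_surjective_iff_isUnit, Matrix.isUnit_iff_isUnit_det, isUnit_iff_ne_zero,
    Matrix.det_fin_two] at hs
  intro e
  apply hs
  simp only [Matrix.map_apply]
  rw [sub_eq_zero]
  exact_mod_cast e

/-- The first stage: `u = x²(1 + y)`, `v = y² + x`. -/
def firstStage [CharP k 2] {x y : L} (ind : AlgebraicIndependent k ![x, y])
    (hxy : IntermediateField.adjoin k {x, y} = ⊤)
    (ind' : AlgebraicIndependent k ![(1 + y) * x ^ 2, y ^ 2 + x]) :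
    Stage (IntermediateField.adjoin k {(1 + y) * x ^ 2, y ^ 2 + x}) where
  x := x
  y := y
  u := (1 + y) * x ^ 2
  v := y ^ 2 + x
  γ := 1 + y
  τ := 1
  Ω := 1
  hxy := hxy
  huv := rfl
  ind := ind
  ind' := ind'
  hγ := ⟨1, one_ne_zero, 1, Un.one _, 0, zero_mem _, by simp⟩
  hτ := Un.one _
  hΩ := Un.one _
  hu := rfl
  hv := by ring

/-- The counterexample inside an arbitrary purely transcendental extension `k(x, y)`. -/
theorem counterexample [IsAlgClosed k] [CharP k 2] {x y : L}
    (ind : AlgebraicIndependent k ![x, y]) (hxy : IntermediateField.adjoin k {x, y} = ⊤) :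
      ∃ K : IntermediateField k L,
        IsFunctionFieldTrdeg2 k K ∧ IsFunctionFieldTrdeg2 k L ∧
        FiniteDimensional K L ∧ Algebra.IsSeparable K L ∧
        ∃ R S : Subalgebra k L,
          IsTwoDimRegularAlgLocalRingOf R (K : Set L) ∧
          IsTwoDimRegularAlgLocalRingOf S (Set.univ : Set L) ∧
          DominatesSet (S : Set L) (R : Set L) ∧
          ∃ ω : ValuationSubring L,
            DominatesSet (ω : Set L) (S : Set L) ∧
            ¬ ∃ R₁ S₁ : Subalgebra k L,
                Relation.ReflTransGen (IsMonoidalTransform (k := k) (F := L)) R R₁ ∧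
                Relation.ReflTransGen (IsMonoidalTransform (k := k) (F := L)) S S₁ ∧
                DominatesSet (ω : Set L) (S₁ : Set L) ∧
                DominatesSet (S₁ : Set L) (R₁ : Set L) ∧
                ∃ (m n : ℕ) (u : Fin m → R₁) (x : Fin n → S₁)
                  (A : Matrix (Fin m) (Fin n) ℤ) (δ : Fin m → S₁),
                  IsRegularSystemOfParameters u ∧ IsRegularSystemOfParameters x ∧
                  (A.map (fun a : ℤ => (a : ℚ))).rank = m ∧
                  (∀ i, IsUnit (δ i)) ∧
                  ∀ i, (u i : L) = (δ i : L) * ∏ j, (x j : L) ^ A i j := by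
  have hx0 : x ≠ 0 := by simpa using ind.ne_zero 0
  have hy1 : 1 + y ≠ 0 := by
    have := (loc_par ind).un_add (Un.one _) (zero_mem _) (one_mem _)
    simpa using this.2.1
  obtain ⟨hfin, hsep⟩ := ext_finite_separable (k := k) hxy hx0
    (mul_ne_zero hy1 (pow_ne_zero 2 hx0)) rfl rfl
  have halg : Algebra.IsAlgebraic
      (IntermediateField.adjoin k {(1 + y) * x ^ 2, y ^ 2 + x}) L := inferInstance
  have ind' : AlgebraicIndependent k ![(1 + y) * x ^ 2, y ^ 2 + x] := algInd_of_isAlgebraic ind halg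
  have : Infinite k := IsAlgClosed.instInfinite
  obtain ⟨st, hst0, hst⟩ := exists_seq (firstStage ind hxy ind')
  obtain ⟨ω, hω⟩ := exists_valuation hst
  refine ⟨_, trdeg2_adjoin ind', trdeg2 ind hxy, hfin, hsep, (st 0).R, (st 0).S, ?_, ?_,
    (st 0).domRS, ω, hω 0, ?_⟩
  · exact loc_twoDim (st 0).ind' (by rw [(st 0).huv])
  · exact loc_twoDim (st 0).ind (by rw [(st 0).hxy]; rfl)
  · rintro ⟨R₁, S₁, hR, hS, hωS, hSR, m, n, u, X, A, δ, hu, hX, hA, hδ, e⟩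
    obtain ⟨i, hR₁⟩ := mem_chainR hst hω hR (dom_trans hωS hSR)
    obtain ⟨j, hS₁⟩ := mem_chainS hst hω hS hωS
    have hpu : ∃ e : m = 2, Par R₁ (u (Fin.cast e.symm 0) : L) (u (Fin.cast e.symm 1)) := by
      rcases hR₁ with rfl | rfl
      · exact rsp_par (st i).ind' hu
      · exact rsp_par (st i).indR' hu
    have hpX : ∃ e : n = 2, Par S₁ (X (Fin.cast e.symm 0) : L) (X (Fin.cast e.symm 1)) := by
      rcases hS₁ with rfl | rfl
      · exact rsp_par (st j).ind hX
      · exact rsp_par (st j).indS' hX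
    obtain ⟨rfl, hpu⟩ := hpu
    obtain ⟨rfl, hpX⟩ := hpX
    have e0 := e 0
    have e1 := e 1
    rw [Fin.prod_univ_two, ← mul_assoc] at e0 e1
    exact not_monomial hst hR₁ hS₁ hSR.1 hpu hpX ((un_iff _).1 (hδ 0)) ((un_iff _).1 (hδ 1))
      e0 e1 (rank_two hA)

open MvPolynomial in
/-- The coordinates of `k(X₀, X₁)` are algebraically independent and generate the field. -/
lemma fractionRing_adjoin (k : Type*) [Field k] :
    AlgebraicIndependent k ![algebraMap (MvPolynomial (Fin 2) k) (FractionRing (MvPolynomial (Fin 2) k)) (X 0),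
      algebraMap (MvPolynomial (Fin 2) k) (FractionRing (MvPolynomial (Fin 2) k)) (X 1)] ∧
    IntermediateField.adjoin k {algebraMap (MvPolynomial (Fin 2) k) (FractionRing (MvPolynomial (Fin 2) k)) (X 0),
      algebraMap (MvPolynomial (Fin 2) k) (FractionRing (MvPolynomial (Fin 2) k)) (X 1)} = ⊤ := by
  set L := FractionRing (MvPolynomial (Fin 2) k)
  let f : MvPolynomial (Fin 2) k →ₐ[k] L := IsScalarTower.toAlgHom k _ L
  have hf : Function.Injective f := IsFractionRing.injective (MvPolynomial (Fin 2) k) L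
  constructor
  · have := (MvPolynomial.algebraicIndependent_X (Fin 2) k).map' hf
    convert this using 1
    ext i; fin_cases i <;> rfl
  · refine top_le_iff.1 fun z _ => ?_
    have hm : ∀ p, f p ∈ IntermediateField.adjoin k {f (X 0), f (X 1)} := by
      intro p
      induction p using MvPolynomial.induction_on with
      | C a =>
        rw [← MvPolynomial.algebraMap_eq, f.commutes]
        exact IntermediateField.algebraMap_mem _ _
      | add p q hp hq => rw [map_add]; exact add_mem hp hq
      | mul_X p i hp =>
        rw [map_mul]
        refine mul_mem hp (IntermediateField.subset_adjoin k _ ?_)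
        fin_cases i <;> simp
    obtain ⟨a, b, -, rfl⟩ := IsFractionRing.div_surjective (A := MvPolynomial (Fin 2) k) z
    exact div_mem (hm a) (hm b)

end Final
end MonomCex
open LocalMonomial in
/-- **Failure of local monomialization in positive characteristic** (Cutkosky):
there exist an algebraically closed field `k` of characteristic `p > 0`, a finite
separable extension `K → L` of two dimensional algebraic function fields over `k`,
local rings `R ⊆ S` of closed points on nonsingular surfaces (equivalently, two
dimensional regular algebraic local rings) with quotient fields `K` and `L`, `S`
dominating `R`, and a valuation `ω` of `L` dominating `S`, admitting no local
monomialization. -/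
theorem local_monomialization_fails_char_p :
    ∃ (k L : Type) (_ : Field k) (_ : Field L) (_ : Algebra k L) (p : ℕ),
      p.Prime ∧ CharP k p ∧ IsAlgClosed k ∧
      ∃ K : IntermediateField k L,
        IsFunctionFieldTrdeg2 k K ∧ IsFunctionFieldTrdeg2 k L ∧
        FiniteDimensional K L ∧ Algebra.IsSeparable K L ∧
        ∃ R S : Subalgebra k L,
          IsTwoDimRegularAlgLocalRingOf R (K : Set L) ∧
          IsTwoDimRegularAlgLocalRingOf S (Set.univ : Set L) ∧
          DominatesSet (S : Set L) (R : Set L) ∧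
          ∃ ω : ValuationSubring L,
            DominatesSet (ω : Set L) (S : Set L) ∧
            ¬ ∃ R₁ S₁ : Subalgebra k L,
                Relation.ReflTransGen (IsMonoidalTransform (k := k) (F := L)) R R₁ ∧
                Relation.ReflTransGen (IsMonoidalTransform (k := k) (F := L)) S S₁ ∧
                DominatesSet (ω : Set L) (S₁ : Set L) ∧
                DominatesSet (S₁ : Set L) (R₁ : Set L) ∧
                ∃ (m n : ℕ) (u : Fin m → R₁) (x : Fin n → S₁)
                  (A : Matrix (Fin m) (Fin n) ℤ) (δ : Fin m → S₁),
                  IsRegularSystemOfParameters u ∧ IsRegularSystemOfParameters x ∧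
                  (A.map (fun a : ℤ => (a : ℚ))).rank = m ∧
                  (∀ i, IsUnit (δ i)) ∧
                  ∀ i, (u i : L) = (δ i : L) * ∏ j, (x j : L) ^ A i j := by
  have : CharP (AlgebraicClosure (ZMod 2)) 2 :=
    charP_of_injective_algebraMap (algebraMap (ZMod 2) _).injective 2
  obtain ⟨h1, h2⟩ := MonomCex.fractionRing_adjoin (AlgebraicClosure (ZMod 2))
  exact ⟨AlgebraicClosure (ZMod 2), FractionRing (MvPolynomial (Fin 2) (AlgebraicClosure (ZMod 2))),
    inferInstance, inferInstance, inferInstance, 2, Nat.prime_two, this, inferInstance,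
    MonomCex.counterexample h1 h2⟩
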